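/- arXiv:0904.2547 — 3 statements merged into one kernel-verified Lean document; each statement's English description precedes it below -/
import Mathlib

section
/- Let γ > 0, ε > 0, and let u₀ : ℝ → ℝ be twice continuously differentiable with u₀ ∈ L¹(ℝ) ∩ L²(ℝ) ∩ L∞(ℝ), and set Q = ∫_ℝ u₀² dx, E = ∫_ℝ [ γ (∫_{−∞}^x u₀)² + (1/3) u₀³ ] dx, and C = (√γ/√2) ( E + γ Q + (1/3) Q ‖u₀‖_{L∞} )^{1/2}. Let T₁ be the smallest positive root of 2√γ T₁ ( ‖u₀‖_{L∞} + C T₁ + (γ Q/6) T₁² )^{1/2} = log(1 + 2/ε), and assume there exists x₀ ∈ ℝ with u₀'(x₀) ≤ −(1+ε) √γ ( ‖u₀‖_{L∞} + C T₁ + (γ Q/6) T₁² )^{1/2}. Then wave breaking occurs before T₁: every decaying classical solution u of the Ostrovsky–Hunter equation on the line on [0,T) with u(0,·) = u₀, with v(t,·) square-integrable and vanishing at ±∞, and with u_x bounded from below on [0,T) × ℝ, has T < T₁. -/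
open MeasureTheory Filter Set intervalIntegral

/-- A decaying classical solution of the Ostrovsky–Hunter equation on the line,
on the set `S` of times (typically `[0,T)`): `u` is continuously differentiable
in `t`, twice continuously differentiable in `x`, integrable in `x` for each
time, and with `v(t,x) = ∫_{-∞}^x u(t,y) dy` the nonlocal equation
`u_t + u u_x = γ v` holds pointwise at positive times of `S`. -/
structure IsLineOHSolution (γ : ℝ) (S : Set ℝ) (u : ℝ → ℝ → ℝ) : Prop where
  diff_t : ∀ t ∈ S, ∀ x : ℝ, DifferentiableAt ℝ (fun s => u s x) t
  diff_x : ∀ t ∈ S, ∀ x : ℝ, DifferentiableAt ℝ (u t) x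
  diff_xx : ∀ t ∈ S, ∀ x : ℝ, DifferentiableAt ℝ (deriv (u t)) x
  cont_u : ContinuousOn (fun p : ℝ × ℝ => u p.1 p.2) (S ×ˢ (Set.univ : Set ℝ))
  cont_ut : ContinuousOn (fun p : ℝ × ℝ => deriv (fun s => u s p.2) p.1)
      (S ×ˢ (Set.univ : Set ℝ))
  cont_ux : ContinuousOn (fun p : ℝ × ℝ => deriv (u p.1) p.2) (S ×ˢ (Set.univ : Set ℝ))
  cont_uxx : ContinuousOn (fun p : ℝ × ℝ => deriv (deriv (u p.1)) p.2)
      (S ×ˢ (Set.univ : Set ℝ))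
  integrable : ∀ t ∈ S, MeasureTheory.Integrable (u t)
  eqn : ∀ t ∈ S, 0 < t → ∀ x : ℝ,
    deriv (fun s => u s x) t + u t x * deriv (u t) x = γ * ∫ y in Set.Iic x, u t y

/-
Along a characteristic `X' = u(t, X)` the slope `w = -u_x` satisfies `w' = w² - γu`. If `u ≤ M`
there and `w(0) ≥ (1 + ε)√(γM)`, comparison with `z' = z² - γM` makes `w` blow up by the time
`log (1 + 2/ε) / (2√(γM))`. Since `du/dt = γv` along the characteristic, `u` is controlled by
`γv`, and the Sobolev inequality bounds `2v²` by `∫u² + ∫v²`. The first integral is conserved;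
for the second, `d/dt ∫v² = -∫vu²` formally, which closes as `(∫v²)' ≤ ‖v‖_∞ ∫u²` and gives
linear growth of `‖v‖_∞`.

Two points are delicate. The primitive of `v`, which enters `v_t`, need not exist; the law for
`∫v²` is therefore derived for `r = v - δ e^{-δ·} * v` and `δ → 0`. And `∫u² + ∫v²` is not
assumed to be locally bounded in time; being lower semicontinuous, it is bounded near some time
by Baire's theorem, and bounds propagate because the growth of the norms is controlled.
-/

lemma continuous_of_hasDerivAt {f f' : ℝ → ℝ} (h : ∀ x, HasDerivAt f (f' x) x) : Continuous f :=
  continuous_iff_continuousAt.2 fun x => (h x).continuousAt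

section LineIntegrals

lemma intervalIntegral_le_integral {f : ℝ → ℝ} (hf : Integrable f) (h0 : ∀ x, 0 ≤ f x) {α β : ℝ}
    (h : α ≤ β) : ∫ x in α..β, f x ≤ ∫ x, f x := by
  rw [intervalIntegral.integral_of_le h]
  exact setIntegral_le_integral hf (Eventually.of_forall h0)

lemma tendsto_intervalIntegral_neg {f : ℝ → ℝ} (hf : Integrable f) :
    Tendsto (fun R : ℝ => ∫ x in (-R)..R, f x) atTop (nhds (∫ x, f x)) :=
  intervalIntegral_tendsto_integral hf tendsto_neg_atTop_atBot tendsto_id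

lemma integral_le_of_intervalIntegral_le {f : ℝ → ℝ} (hf : Integrable f) {K : ℝ}
    (h : ∀ R : ℝ, 0 ≤ R → ∫ x in (-R)..R, f x ≤ K) : ∫ x, f x ≤ K :=
  le_of_tendsto (tendsto_intervalIntegral_neg hf) ((eventually_ge_atTop 0).mono h)

lemma integral_sq_pos {f : ℝ → ℝ} (hf : Continuous f) (hint : Integrable fun x => f x ^ 2) {x : ℝ}
    (hx : f x ≠ 0) : 0 < ∫ y, f y ^ 2 := by
  rw [integral_pos_iff_support_of_nonneg (fun y => sq_nonneg (f y)) hint]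
  exact (hf.pow 2).isOpen_support.measure_pos volume ⟨x, pow_ne_zero 2 hx⟩

variable {u v : ℝ → ℝ}

lemma integrable_two_mul_mul (hu : Continuous u) (hv : Continuous v)
    (iu : Integrable fun x => u x ^ 2) (iv : Integrable fun x => v x ^ 2) :
    Integrable fun x => 2 * v x * u x := by
  refine (iu.add iv).mono' (by fun_prop) (Eventually.of_forall fun x => ?_)
  rw [Real.norm_eq_abs, Pi.add_apply, abs_le]
  constructor <;> nlinarith [sq_nonneg (u x - v x), sq_nonneg (u x + v x)]

theorem two_mul_sq_le_integral_sq_add_integral_sq (hu : Continuous u)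
    (hv : ∀ x, HasDerivAt v (u x) x) (iu : Integrable fun x => u x ^ 2)
    (iv : Integrable fun x => v x ^ 2) (htop : Tendsto v atTop (nhds 0))
    (hbot : Tendsto v atBot (nhds 0)) (x : ℝ) :
    2 * v x ^ 2 ≤ (∫ y, u y ^ 2) + ∫ y, v y ^ 2 := by
  have cv : Continuous v := continuous_of_hasDerivAt hv
  have i2 := integrable_two_mul_mul hu cv iu iv
  have isum : Integrable fun y => u y ^ 2 + v y ^ 2 := iu.add iv
  have hd (y : ℝ) : HasDerivAt (fun y => v y ^ 2) (2 * v y * u y) y := by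
    simpa using (hv y).fun_pow 2
  have left : ∫ y in Iic x, 2 * v y * u y = v x ^ 2 - 0 :=
    integral_Iic_of_hasDerivAt_of_tendsto' (fun y _ => hd y) i2.integrableOn
      (by simpa using hbot.pow 2)
  have right : ∫ y in Ioi x, 2 * v y * u y = 0 - v x ^ 2 :=
    integral_Ioi_of_hasDerivAt_of_tendsto' (fun y _ => hd y) i2.integrableOn
      (by simpa using htop.pow 2)
  have lower : ∫ y in Iic x, 2 * v y * u y ≤ ∫ y in Iic x, (u y ^ 2 + v y ^ 2) :=
    integral_mono i2.integrableOn isum.integrableOn fun y => by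
      nlinarith [sq_nonneg (u y - v y)]
  have upper : -∫ y in Ioi x, 2 * v y * u y ≤ ∫ y in Ioi x, (u y ^ 2 + v y ^ 2) := by
    rw [← MeasureTheory.integral_neg]
    exact integral_mono i2.neg.integrableOn isum.integrableOn fun y => by
      nlinarith [sq_nonneg (u y + v y)]
  have split := integral_Iic_add_Ioi isum.integrableOn isum.integrableOn (b := x)
  rw [integral_add iu iv] at split
  linarith

end LineIntegrals

section DerivBoundedBelow

variable {v u ux : ℝ → ℝ} {c : ℝ}

lemma mul_add_sq_le_sub_of_le_deriv2 (hv : ∀ x, HasDerivAt v (u x) x)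
    (hu : ∀ x, HasDerivAt u (ux x) x) (hc : ∀ x, c ≤ ux x) (x h : ℝ) :
    h * u x + c / 2 * h ^ 2 ≤ v (x + h) - v x := by
  have dg (y : ℝ) : HasDerivAt (fun y => v y - c / 2 * y ^ 2) (u y - c * y) y := by
    refine ((hv y).sub (((hasDerivAt_id y).fun_pow 2).const_mul (c / 2))).congr_deriv ?_
    simp only [id, Nat.cast_ofNat, Nat.add_one_sub_one, pow_one, mul_one]
    ring
  have dg' (y : ℝ) : HasDerivAt (fun y => u y - c * y) (ux y - c) y := by
    simpa using (hu y).fun_sub ((hasDerivAt_id y).const_mul c)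
  have mono : Monotone fun y => u y - c * y :=
    monotone_of_hasDerivAt_nonneg dg' fun y => sub_nonneg.2 (hc y)
  have conv : ConvexOn ℝ univ fun y => v y - c / 2 * y ^ 2 :=
    Monotone.convexOn_univ_of_deriv (fun y => (dg y).differentiableAt) <| by
      rwa [show deriv (fun y => v y - c / 2 * y ^ 2) = fun y => u y - c * y from
        funext fun y => (dg y).deriv]
  have tangent : (u x - c * x) * h ≤ v (x + h) - c / 2 * (x + h) ^ 2 - (v x - c / 2 * x ^ 2) := by
    rcases lt_trichotomy h 0 with hh | rfl | hh
    · have := conv.slope_le_of_hasDerivAt (mem_univ (x + h)) (mem_univ x) (by linarith) (dg x)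
      rw [slope_def_field, div_le_iff₀ (by linarith)] at this
      linarith
    · simp
    · have := conv.le_slope_of_hasDerivAt (mem_univ x) (mem_univ (x + h)) (by linarith) (dg x)
      rw [slope_def_field, le_div_iff₀ (by linarith)] at this
      linarith
  linarith

lemma abs_le_of_le_deriv2 (hv : ∀ x, HasDerivAt v (u x) x) (hu : ∀ x, HasDerivAt u (ux x) x)
    (hc : ∀ x, c ≤ ux x) {B : ℝ} (hB : ∀ x, |v x| ≤ B) (x : ℝ) : |u x| ≤ 2 * B + |c| := by
  have forward := mul_add_sq_le_sub_of_le_deriv2 hv hu hc x 1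
  have backward := mul_add_sq_le_sub_of_le_deriv2 hv hu hc x (-1)
  have := abs_le.1 (hB x)
  have := abs_le.1 (hB (x + 1))
  have := abs_le.1 (hB (x + -1))
  have := neg_abs_le c
  have := abs_nonneg c
  rw [abs_le]
  constructor <;> linarith

lemma tendsto_zero_of_le_deriv2 (hv : ∀ x, HasDerivAt v (u x) x)
    (hu : ∀ x, HasDerivAt u (ux x) x) (hc : ∀ x, c ≤ ux x) {l : Filter ℝ}
    (hl : ∀ h : ℝ, Tendsto (fun x => v (x + h)) l (nhds 0)) : Tendsto u l (nhds 0) := by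
  have hl0 : Tendsto v l (nhds 0) := by simpa using hl 0
  have eventually_mul_lt (h : ℝ) (hh : h ≠ 0) :
      ∀ᶠ x in l, h * u x < h ^ 2 + -(c / 2 * h ^ 2) := by
    have lim : Tendsto (fun x => v (x + h) - v x - c / 2 * h ^ 2) l
        (nhds (-(c / 2 * h ^ 2))) := by
      simpa using ((hl h).sub hl0).sub_const (c / 2 * h ^ 2)
    filter_upwards [lim.eventually_lt_const (lt_add_of_pos_left _ (by positivity : 0 < h ^ 2))]
      with x hx
    linarith [mul_add_sq_le_sub_of_le_deriv2 hv hu hc x h]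
  rw [tendsto_order]
  have choose_step (e : ℝ) (he : 0 < e) : ∃ h > 0, h * (1 - c / 2) < e := by
    have : Tendsto (fun h : ℝ => h * (1 - c / 2)) (nhdsWithin 0 (Ioi 0)) (nhds 0) := by
      simpa using (tendsto_id.mono_left nhdsWithin_le_nhds :
        Tendsto id (nhdsWithin (0 : ℝ) (Ioi 0)) (nhds 0)).mul_const (1 - c / 2)
    obtain ⟨h, hlt, hpos⟩ := ((this.eventually_lt_const he).and self_mem_nhdsWithin).exists
    exact ⟨h, hpos, hlt⟩
  constructor
  · intro e he
    obtain ⟨h, hpos, hlt⟩ := choose_step (-e) (by linarith)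
    filter_upwards [eventually_mul_lt (-h) (by linarith)] with x hx
    have : h * (-u x) < h * (h * (1 - c / 2)) := by linarith
    linarith [lt_of_mul_lt_mul_left this hpos.le]
  · intro e he
    obtain ⟨h, hpos, hlt⟩ := choose_step e he
    filter_upwards [eventually_mul_lt h hpos.ne'] with x hx
    have : h * u x < h * (h * (1 - c / 2)) := by linarith
    linarith [lt_of_mul_lt_mul_left this hpos.le]

end DerivBoundedBelow

section ParametricIntegrals

lemma hasDerivAt_intervalIntegral_of_continuous {G Gx : ℝ → ℝ → ℝ}
    (hG : Continuous fun p : ℝ × ℝ => G p.1 p.2) (hGx : Continuous fun p : ℝ × ℝ => Gx p.1 p.2)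
    (hd : ∀ τ x, HasDerivAt (G τ) (Gx τ x) x) (s t x : ℝ) :
    HasDerivAt (fun x => ∫ τ in s..t, G τ x) (∫ τ in s..t, Gx τ x) x := by
  obtain ⟨M, hM⟩ := (isCompact_uIcc (a := s) (b := t)).prod
    (isCompact_Icc (a := x - 1) (b := x + 1)) |>.exists_bound_of_continuousOn hGx.continuousOn
  refine (intervalIntegral.hasDerivAt_integral_of_dominated_loc_of_deriv_le
    (F := fun x τ => G τ x) (F' := fun x τ => Gx τ x) (s := Ioo (x - 1) (x + 1))
    (bound := fun _ => M) (Ioo_mem_nhds (by linarith) (by linarith))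
    (Eventually.of_forall fun y => (hG.uncurry_right y).aestronglyMeasurable)
    ((hG.uncurry_right x).intervalIntegrable _ _) (hGx.uncurry_right x).aestronglyMeasurable
    (Eventually.of_forall fun τ hτ y hy => ?_) intervalIntegrable_const
    (Eventually.of_forall fun τ _ y _ => hd τ y)).2
  exact hM (τ, y) ⟨uIoc_subset_uIcc hτ, Ioo_subset_Icc_self hy⟩

lemma intervalIntegral_sub_eq_of_hasDerivAt {W Wt : ℝ → ℝ → ℝ}
    (hW : Continuous fun p : ℝ × ℝ => W p.1 p.2) (hWt : Continuous fun p : ℝ × ℝ => Wt p.1 p.2)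
    {a b : ℝ} (hab : a ≤ b)
    (hd : ∀ τ ∈ Ioo a b, ∀ x, HasDerivAt (fun s => W s x) (Wt τ x) τ) (α β : ℝ) :
    (∫ x in α..β, W b x) - ∫ x in α..β, W a x = ∫ τ in a..b, ∫ x in α..β, Wt τ x := by
  have ftc (x : ℝ) : W b x - W a x = ∫ τ in a..b, Wt τ x :=
    (integral_eq_sub_of_hasDerivAt_of_le hab (hW.uncurry_right x).continuousOn
      (fun τ hτ => hd τ hτ x) ((hWt.uncurry_right x).intervalIntegrable _ _)).symm
  have swapped : Continuous (Function.uncurry fun x τ => Wt τ x) := hWt.comp continuous_swap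
  rw [← intervalIntegral.integral_sub ((hW.uncurry_left b).intervalIntegrable _ _)
    ((hW.uncurry_left a).intervalIntegrable _ _)]
  simp_rw [ftc]
  exact intervalIntegral_intervalIntegral_swap
    ((swapped.continuousOn.integrableOn_compact (isCompact_uIcc.prod isCompact_uIcc)).mono_set
      (prod_mono uIoc_subset_uIcc uIoc_subset_uIcc))

lemma tendsto_intervalIntegral_zero {F : ℝ → ℝ → ℝ} (hF : Continuous fun p : ℝ × ℝ => F p.1 p.2)
    {K : ℝ} (hK : ∀ τ x, |F τ x| ≤ K) {l : Filter ℝ} [l.IsCountablyGenerated]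
    (hl : ∀ τ, Tendsto (F τ) l (nhds 0)) (a b : ℝ) :
    Tendsto (fun x => ∫ τ in a..b, F τ x) l (nhds 0) := by
  simpa using intervalIntegral.tendsto_integral_filter_of_dominated_convergence
    (μ := volume) (a := a) (b := b) (F := fun x τ => F τ x) (f := fun _ => 0) (fun _ => K)
    (Eventually.of_forall fun x => (hF.uncurry_right x).aestronglyMeasurable)
    (Eventually.of_forall fun x => Eventually.of_forall fun τ _ => hK τ x)
    intervalIntegrable_const (Eventually.of_forall fun τ _ => hl τ)

lemma continuousOn_parametric_intervalIntegral {W : ℝ → ℝ → ℝ} {J : Set ℝ}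
    (hW : ContinuousOn (fun p : ℝ × ℝ => W p.1 p.2) (J ×ˢ univ)) (α β : ℝ) :
    ContinuousOn (fun τ => ∫ x in α..β, W τ x) J := by
  rw [continuousOn_iff_continuous_domRestrict]
  exact continuous_parametric_intervalIntegral_of_continuous' (f := fun (τ : J) x => W τ x)
    (hW.comp_continuous (f := fun p : J × ℝ => ((p.1 : ℝ), p.2)) (by fun_prop)
      fun p => ⟨p.1.2, mem_univ _⟩) α β

end ParametricIntegrals

section ExponentialSmoothing

/-- The convolution of `f` with the one-sided exponential kernel `e^{-δσ}`, `σ > 0`: a decaying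
substitute for the primitive of `f`, to which it tends formally as `δ → 0`. -/
noncomputable def expConv (δ : ℝ) (f : ℝ → ℝ) (x : ℝ) : ℝ :=
  ∫ σ in Ioi (0 : ℝ), Real.exp (-δ * σ) * f (x - σ)

/-- The high-pass filter of cut-off frequency `δ`. It is the derivative of `expConv δ f`, and tends
formally to `f` as `δ → 0`. -/
noncomputable def highPass (δ : ℝ) (f : ℝ → ℝ) (x : ℝ) : ℝ := f x - δ * expConv δ f x

variable {δ B : ℝ} {f : ℝ → ℝ}

lemma integrableOn_exp_neg_mul_Ioi (hδ : 0 < δ) :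
    IntegrableOn (fun σ => Real.exp (-δ * σ)) (Ioi 0) :=
  integrableOn_exp_mul_Ioi (neg_lt_zero.2 hδ) 0

lemma integral_exp_neg_mul_Ioi (hδ : 0 < δ) : ∫ σ in Ioi 0, Real.exp (-δ * σ) = 1 / δ := by
  rw [integral_exp_mul_Ioi (neg_lt_zero.2 hδ), mul_zero, Real.exp_zero, neg_div_neg_eq]

lemma norm_exp_mul_le (hB : ∀ x, |f x| ≤ B) (s x : ℝ) :
    ‖Real.exp s * f x‖ ≤ Real.exp s * B := by
  rw [norm_mul, Real.norm_eq_abs, Real.abs_exp]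
  exact mul_le_mul_of_nonneg_left (hB x) (Real.exp_pos s).le

lemma abs_expConv_le (hδ : 0 < δ) (hB : ∀ x, |f x| ≤ B) (x : ℝ) : |expConv δ f x| ≤ B / δ := by
  have bound := norm_integral_le_of_norm_le ((integrableOn_exp_neg_mul_Ioi hδ).mul_const B)
    (Eventually.of_forall fun σ => norm_exp_mul_le hB (-δ * σ) (x - σ))
  rwa [MeasureTheory.integral_mul_const, integral_exp_neg_mul_Ioi hδ, one_div_mul_eq_div] at bound

lemma abs_highPass_le (hδ : 0 < δ) (hB : ∀ x, |f x| ≤ B) (x : ℝ) : |highPass δ f x| ≤ 2 * B := by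
  have := mul_le_mul_of_nonneg_left (abs_expConv_le hδ hB x) hδ.le
  rw [mul_div_cancel₀ B hδ.ne', ← abs_of_pos hδ, ← abs_mul, abs_of_pos hδ] at this
  refine (abs_sub _ _).trans ?_
  linarith [hB x]

lemma expConv_nonneg (h : ∀ x, 0 ≤ f x) (x : ℝ) : 0 ≤ expConv δ f x :=
  integral_nonneg fun _ => mul_nonneg (Real.exp_pos _).le (h _)

lemma tendsto_expConv_zero (hδ : 0 < δ) (hf : Continuous f) (hB : ∀ x, |f x| ≤ B)
    {l : Filter ℝ} [l.IsCountablyGenerated]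
    (hl : ∀ σ : ℝ, Tendsto (fun x => f (x - σ)) l (nhds 0)) :
    Tendsto (expConv δ f) l (nhds 0) := by
  have : Tendsto (expConv δ f) l (nhds (∫ _ in Ioi (0 : ℝ), (0 : ℝ))) := by
    refine tendsto_integral_filter_of_dominated_convergence (fun σ => Real.exp (-δ * σ) * B)
      (Eventually.of_forall fun x => Continuous.aestronglyMeasurable (by fun_prop))
      (Eventually.of_forall fun x => Eventually.of_forall fun _ => norm_exp_mul_le hB _ _)
      ((integrableOn_exp_neg_mul_Ioi hδ).mul_const B) (Eventually.of_forall fun σ => ?_)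
    simpa using (hl σ).const_mul (Real.exp (-δ * σ))
  simpa using this

lemma continuous_expConv_uncurry (hδ : 0 < δ) {F : ℝ → ℝ → ℝ}
    (hF : Continuous fun p : ℝ × ℝ => F p.1 p.2) (hB : ∀ τ x, |F τ x| ≤ B) :
    Continuous fun p : ℝ × ℝ => expConv δ (F p.1) p.2 := by
  have shifted (σ : ℝ) : Continuous fun p : ℝ × ℝ => F p.1 (p.2 - σ) :=
    hF.comp (by fun_prop : Continuous fun p : ℝ × ℝ => (p.1, p.2 - σ))
  refine continuous_of_dominated (bound := fun σ => Real.exp (-δ * σ) * B) (fun p => ?_)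
    (fun p => Eventually.of_forall fun σ => norm_exp_mul_le (hB p.1) _ _)
    ((integrableOn_exp_neg_mul_Ioi hδ).mul_const B)
    (Eventually.of_forall fun σ => (shifted σ).const_mul _)
  have slice : Continuous (F p.1) := hF.uncurry_left p.1
  exact Continuous.aestronglyMeasurable (by fun_prop)

lemma continuous_highPass_uncurry (hδ : 0 < δ) {F : ℝ → ℝ → ℝ}
    (hF : Continuous fun p : ℝ × ℝ => F p.1 p.2) (hB : ∀ τ x, |F τ x| ≤ B) :
    Continuous fun p : ℝ × ℝ => highPass δ (F p.1) p.2 :=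
  hF.sub ((continuous_expConv_uncurry hδ hF hB).const_mul δ)

lemma expConv_eq_exp_mul_integral_Iic (f : ℝ → ℝ) (x : ℝ) :
    expConv δ f x = Real.exp (-δ * x) * ∫ y in Iic x, Real.exp (δ * y) * f y := by
  have preimage : (fun σ => x - σ) ⁻¹' Iio x = Ioi 0 := by ext; simp
  have reflect := (volume.measurePreserving_sub_left x).setIntegral_preimage_emb
    (MeasurableEquiv.subLeft x).measurableEmbedding
    (fun y => Real.exp (-δ * x) * (Real.exp (δ * y) * f y)) (Iio x)
  rw [preimage] at reflect
  rw [← MeasureTheory.integral_const_mul, integral_Iic_eq_integral_Iio, ← reflect, expConv]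
  refine integral_congr_ae (Eventually.of_forall fun σ => ?_)
  simp only [← mul_assoc, ← Real.exp_add]
  ring_nf

theorem hasDerivAt_expConv (hδ : 0 < δ) (hf : Continuous f) (hB : ∀ x, |f x| ≤ B) (x : ℝ) :
    HasDerivAt (expConv δ f) (highPass δ f x) x := by
  set g : ℝ → ℝ := fun y => Real.exp (δ * y) * f y with hg
  have cg : Continuous g := by fun_prop
  have ig (z : ℝ) : IntegrableOn g (Iic z) :=
    ((integrableOn_exp_mul_Iic hδ z).mul_const B).mono' cg.aestronglyMeasurable
      (Eventually.of_forall fun y => norm_exp_mul_le hB _ _)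
  have split (z : ℝ) :
      expConv δ f z = Real.exp (-δ * z) * ((∫ y in Iic 0, g y) + ∫ y in (0 : ℝ)..z, g y) := by
    rw [expConv_eq_exp_mul_integral_Iic, ← integral_Iic_sub_Iic (ig 0) (ig z), add_sub_cancel]
  have dexp : HasDerivAt (fun z => Real.exp (-δ * z)) (Real.exp (-δ * x) * -δ) x := by
    simpa using ((hasDerivAt_id x).const_mul (-δ)).exp
  have dint : HasDerivAt (fun z => (∫ y in Iic 0, g y) + ∫ y in (0 : ℝ)..z, g y) (g x) x :=
    (cg.integral_hasStrictDerivAt 0 x).hasDerivAt.const_add _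
  rw [funext split]
  refine (dexp.mul dint).congr_deriv ?_
  rw [highPass, split x, hg, ← mul_assoc (Real.exp (-δ * x)) (Real.exp (δ * x)), ← Real.exp_add]
  simp only [neg_mul, neg_add_cancel, Real.exp_zero]
  ring

lemma continuous_expConv (hδ : 0 < δ) (hf : Continuous f) (hB : ∀ x, |f x| ≤ B) :
    Continuous (expConv δ f) :=
  continuous_of_hasDerivAt (hasDerivAt_expConv hδ hf hB)

lemma continuous_highPass (hδ : 0 < δ) (hf : Continuous f) (hB : ∀ x, |f x| ≤ B) :
    Continuous (highPass δ f) :=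
  hf.sub ((continuous_expConv hδ hf hB).const_mul δ)

lemma hasDerivAt_highPass (hδ : 0 < δ) {f' : ℝ → ℝ} (hf : ∀ x, HasDerivAt f (f' x) x)
    (hB : ∀ x, |f x| ≤ B) (x : ℝ) : HasDerivAt (highPass δ f) (f' x - δ * highPass δ f x) x :=
  (hf x).sub ((hasDerivAt_expConv hδ (continuous_of_hasDerivAt hf) hB x).const_mul δ)

lemma eq_zero_of_hasDerivAt_neg_mul (hδ : 0 < δ) (hf : ∀ x, HasDerivAt f (-δ * f x) x)
    (hB : ∀ x, |f x| ≤ B) (x : ℝ) : f x = 0 := by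
  have dconst (y : ℝ) : HasDerivAt (fun y => Real.exp (δ * y) * f y) 0 y := by
    refine (((hasDerivAt_id y).const_mul δ).exp.mul (hf y)).congr_deriv ?_
    simp only [id]
    ring
  have const (y : ℝ) : Real.exp (δ * x) * f x = Real.exp (δ * y) * f y :=
    is_const_of_deriv_eq_zero (fun z => (dconst z).differentiableAt) (fun z => (dconst z).deriv) x y
  have lim : Tendsto (fun y => Real.exp (δ * y) * B) atBot (nhds 0) := by
    simpa using (Real.tendsto_exp_atBot.comp (tendsto_id.const_mul_atBot hδ)).mul_const B
  have bound : ‖Real.exp (δ * x) * f x‖ ≤ 0 :=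
    ge_of_tendsto' lim fun y => by rw [const y]; exact norm_exp_mul_le hB _ _
  exact (mul_eq_zero.1 (norm_le_zero_iff.1 bound)).resolve_left (Real.exp_pos _).ne'

theorem hasDerivAt_of_damped_transport {φ φt r G : ℝ → ℝ → ℝ} {a b B' : ℝ} (hδ : 0 < δ)
    (cφ : Continuous fun p : ℝ × ℝ => φ p.1 p.2) (cφt : Continuous fun p : ℝ × ℝ => φt p.1 p.2)
    (cG : Continuous fun p : ℝ × ℝ => G p.1 p.2)
    (dφ : ∀ τ ∈ Ioo a b, ∀ x, HasDerivAt (fun s => φ s x) (φt τ x) τ)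
    (dr : ∀ τ x, HasDerivAt (r τ) (φ τ x - δ * r τ x) x)
    (dG : ∀ τ x, HasDerivAt (G τ) (φt τ x - δ * G τ x) x)
    (br : ∀ τ x, |r τ x| ≤ B) (bG : ∀ τ x, |G τ x| ≤ B') {τ : ℝ} (hτ : τ ∈ Ioo a b) (x : ℝ) :
    HasDerivAt (fun s => r s x) (G τ x) τ := by
  -- `r t - r a` and `∫ₐᵗ G` solve the same damped equation, whose bounded solution is unique.
  have increment (t : ℝ) (ht : t ∈ Ioo a b) : r t x - r a x - ∫ s in a..t, G s x = 0 := by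
    refine eq_zero_of_hasDerivAt_neg_mul (f := fun x => r t x - r a x - ∫ s in a..t, G s x) hδ
      (fun y => ?_) (B := B + B + B' * |t - a|) (fun y => ?_) x
    · have ftc : ∫ s in a..t, φt s y = φ t y - φ a y :=
        integral_eq_sub_of_hasDerivAt_of_le ht.1.le (cφ.uncurry_right y).continuousOn
          (fun s hs => dφ s ⟨hs.1, hs.2.trans ht.2⟩ y)
          ((cφt.uncurry_right y).intervalIntegrable _ _)
      refine (((dr t y).sub (dr a y)).sub (hasDerivAt_intervalIntegral_of_continuous cG
        (cφt.sub (cG.const_mul δ)) dG a t y)).congr_deriv ?_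
      rw [intervalIntegral.integral_sub ((cφt.uncurry_right y).intervalIntegrable _ _)
        (((cG.uncurry_right y).const_mul δ).intervalIntegrable _ _),
        intervalIntegral.integral_const_mul, ftc]
      ring
    · refine (abs_sub _ _).trans
        (add_le_add ((abs_sub _ _).trans (add_le_add (br _ _) (br _ _))) ?_)
      exact intervalIntegral.norm_integral_le_of_norm_le_const (f := fun s => G s y)
        fun s _ => bG s y
  have dint := ((cG.uncurry_right x).integral_hasStrictDerivAt a τ).hasDerivAt.const_add (r a x)
  refine dint.congr_of_eventuallyEq ?_
  filter_upwards [Ioo_mem_nhds hτ.1 hτ.2] with t ht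
  linarith [increment t ht]

end ExponentialSmoothing

section HighPassEstimates

variable {δ B n : ℝ} {v f : ℝ → ℝ}

lemma sqrt_mul_abs_expConv_le (hδ : 0 < δ) (iv : Integrable fun x => v x ^ 2) (x : ℝ) :
    √δ * |expConv δ v x| ≤ 1 + ∫ y, v y ^ 2 := by
  have iexp := (integrableOn_exp_neg_mul_Ioi (by positivity : 0 < 2 * δ)).const_mul δ
  have ishift : Integrable fun σ => v (x - σ) ^ 2 := iv.comp_sub_left x
  have pointwise (σ : ℝ) : ‖√δ * (Real.exp (-δ * σ) * v (x - σ))‖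
      ≤ δ * Real.exp (-(2 * δ) * σ) + v (x - σ) ^ 2 := by
    have square : δ * Real.exp (-(2 * δ) * σ) = (√δ * Real.exp (-δ * σ)) ^ 2 := by
      rw [mul_pow, Real.sq_sqrt hδ.le, ← Real.exp_nat_mul]
      ring_nf
    rw [square, ← mul_assoc, Real.norm_eq_abs, abs_le]
    constructor <;> nlinarith [sq_nonneg (√δ * Real.exp (-δ * σ) - v (x - σ)),
      sq_nonneg (√δ * Real.exp (-δ * σ) + v (x - σ))]
  have bound := norm_integral_le_of_norm_le (iexp.add ishift.integrableOn)
    (Eventually.of_forall pointwise)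
  have total : ∫ σ in Ioi 0, v (x - σ) ^ 2 ≤ ∫ y, v y ^ 2 := by
    rw [← integral_sub_left_eq_self (fun y => v y ^ 2) volume x]
    exact setIntegral_le_integral ishift (Eventually.of_forall fun σ => sq_nonneg _)
  simp only [Pi.add_apply] at bound
  rw [integral_add iexp ishift.integrableOn, MeasureTheory.integral_const_mul,
    MeasureTheory.integral_const_mul, integral_exp_neg_mul_Ioi (by positivity), norm_mul,
    Real.norm_of_nonneg (Real.sqrt_nonneg δ), Real.norm_eq_abs] at bound
  have half : δ * (1 / (2 * δ)) ≤ 1 := by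
    field_simp
    norm_num
  exact bound.trans (add_le_add half total)

lemma mul_abs_expConv_le (hδ : 0 < δ) (iv : Integrable fun x => v x ^ 2)
    (hn : ∫ x, v x ^ 2 ≤ n) (x : ℝ) : δ * |expConv δ v x| ≤ √δ * (1 + n) := by
  have bound := (sqrt_mul_abs_expConv_le hδ iv x).trans (add_le_add_right hn 1)
  calc δ * |expConv δ v x| = √δ * (√δ * |expConv δ v x|) := by
        rw [← mul_assoc, Real.mul_self_sqrt hδ.le]
    _ ≤ √δ * (1 + n) := mul_le_mul_of_nonneg_left bound (Real.sqrt_nonneg δ)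

lemma mul_expConv_sq_le (hδ : 0 < δ) (iv : Integrable fun x => v x ^ 2)
    (hn : ∫ x, v x ^ 2 ≤ n) (x : ℝ) : δ * expConv δ v x ^ 2 ≤ (1 + n) ^ 2 := by
  have bound := (sqrt_mul_abs_expConv_le hδ iv x).trans (add_le_add_right hn 1)
  calc δ * expConv δ v x ^ 2 = (√δ * |expConv δ v x|) ^ 2 := by
        rw [mul_pow, Real.sq_sqrt hδ.le, sq_abs]
    _ ≤ (1 + n) ^ 2 := by gcongr

lemma intervalIntegral_highPass_sq_le (hδ : 0 < δ) (cv : Continuous v) (hB : ∀ x, |v x| ≤ B)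
    (iv : Integrable fun x => v x ^ 2) {α β : ℝ} (h : α ≤ β) :
    ∫ x in α..β, highPass δ v x ^ 2 ≤ (∫ x, v x ^ 2) + δ * expConv δ v α ^ 2 := by
  have cq := continuous_expConv hδ cv hB
  have cr := continuous_highPass hδ cv hB
  have dq (x : ℝ) : HasDerivAt (fun x => δ * expConv δ v x ^ 2)
      (2 * δ * expConv δ v x * highPass δ v x) x := by
    refine (((hasDerivAt_expConv hδ cv hB x).fun_pow 2).const_mul δ).congr_deriv ?_
    simp only [Nat.cast_ofNat, Nat.add_one_sub_one, pow_one]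
    ring
  have ftc := integral_eq_sub_of_hasDerivAt (a := α) (b := β) (fun x _ => dq x)
    (Continuous.intervalIntegrable (by fun_prop) _ _)
  have pointwise : ∫ x in α..β, (highPass δ v x ^ 2 + 2 * δ * expConv δ v x * highPass δ v x)
      ≤ ∫ x in α..β, v x ^ 2 :=
    integral_mono_on h (Continuous.intervalIntegrable (by fun_prop) _ _)
      (Continuous.intervalIntegrable (by fun_prop) _ _) fun x _ => by
        rw [highPass]
        nlinarith [sq_nonneg (δ * expConv δ v x)]
  rw [intervalIntegral.integral_add (Continuous.intervalIntegrable (by fun_prop) _ _)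
    (Continuous.intervalIntegrable (by fun_prop) _ _), ftc] at pointwise
  have window := intervalIntegral_le_integral iv (fun x => sq_nonneg (v x)) h
  have : 0 ≤ δ * expConv δ v β ^ 2 := by positivity
  linarith

lemma integrable_highPass_sq (hδ : 0 < δ) (cv : Continuous v) (hB : ∀ x, |v x| ≤ B)
    (iv : Integrable fun x => v x ^ 2) : Integrable fun x => highPass δ v x ^ 2 := by
  have cr2 := (continuous_highPass hδ cv hB).pow 2
  refine integrable_of_intervalIntegral_norm_bounded (a := fun R : ℝ => -R) (b := id) (l := atTop)
    ((∫ x, v x ^ 2) + (1 + ∫ x, v x ^ 2) ^ 2) (fun R => cr2.integrableOn_Ioc)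
    tendsto_neg_atTop_atBot tendsto_id ?_
  filter_upwards [eventually_ge_atTop 0] with R hR
  simp only [Real.norm_of_nonneg (sq_nonneg _), id]
  exact (intervalIntegral_highPass_sq_le hδ cv hB iv (by linarith)).trans
    (add_le_add_right (mul_expConv_sq_le hδ iv le_rfl (-R)) _)

lemma integral_highPass_sq_le (hδ : 0 < δ) (cv : Continuous v) (hB : ∀ x, |v x| ≤ B)
    (iv : Integrable fun x => v x ^ 2) (hbot : Tendsto v atBot (nhds 0)) :
    ∫ x, highPass δ v x ^ 2 ≤ ∫ x, v x ^ 2 := by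
  have qbot : Tendsto (fun R => expConv δ v (-R)) atTop (nhds 0) :=
    (tendsto_expConv_zero hδ cv hB fun σ =>
      hbot.comp (tendsto_atBot_add_const_right _ (-σ) tendsto_id)).comp tendsto_neg_atTop_atBot
  have bound := ((qbot.pow 2).const_mul δ).const_add (∫ x, v x ^ 2)
  rw [zero_pow two_ne_zero, mul_zero, add_zero] at bound
  refine le_of_tendsto_of_tendsto
    (tendsto_intervalIntegral_neg (integrable_highPass_sq hδ cv hB iv)) bound ?_
  filter_upwards [eventually_ge_atTop 0] with R hR
  exact intervalIntegral_highPass_sq_le hδ cv hB iv (by linarith)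

theorem integral_sq_le_of_integral_highPass_sq_le {K M : ℝ} (cv : Continuous v)
    (hB : ∀ x, |v x| ≤ B) (iv : Integrable fun x => v x ^ 2)
    (h : ∀ δ, 0 < δ → ∫ x, highPass δ v x ^ 2 ≤ K + √δ * M) : ∫ x, v x ^ 2 ≤ K := by
  have hB0 : 0 ≤ B := (abs_nonneg _).trans (hB 0)
  refine integral_le_of_intervalIntegral_le iv fun R hR => ?_
  set m := 1 + ∫ x, v x ^ 2
  have window (δ : ℝ) (hδ : 0 < δ) :
      ∫ x in (-R)..R, v x ^ 2 ≤ K + √δ * M + (R - -R) * (2 * B * (√δ * m)) := by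
    have cr := continuous_highPass hδ cv hB
    have pointwise (x : ℝ) : v x ^ 2 ≤ highPass δ v x ^ 2 + 2 * B * (√δ * m) := by
      have cross : v x * (δ * expConv δ v x) ≤ B * (√δ * m) := by
        refine (le_abs_self _).trans ?_
        rw [abs_mul, abs_mul, abs_of_pos hδ]
        exact mul_le_mul (hB x) (mul_abs_expConv_le hδ iv le_rfl x) (by positivity) hB0
      rw [highPass]
      nlinarith [sq_nonneg (δ * expConv δ v x)]
    have integrated := integral_mono_on (μ := volume) (by linarith : -R ≤ R)
      (Continuous.intervalIntegrable (by fun_prop) _ _)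
      (Continuous.intervalIntegrable (by fun_prop) _ _) fun x _ => pointwise x
    rw [intervalIntegral.integral_add (Continuous.intervalIntegrable (by fun_prop) _ _)
      intervalIntegrable_const, intervalIntegral.integral_const, smul_eq_mul] at integrated
    have total := intervalIntegral_le_integral (integrable_highPass_sq hδ cv hB iv)
      (fun x => sq_nonneg _) (by linarith : -R ≤ R)
    linarith [h δ hδ]
  have lim : Tendsto (fun δ => K + √δ * M + (R - -R) * (2 * B * (√δ * m)))
      (nhdsWithin 0 (Ioi 0)) (nhds K) := by
    have cont : Continuous fun δ => K + √δ * M + (R - -R) * (2 * B * (√δ * m)) := by fun_prop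
    simpa using (cont.tendsto 0).mono_left nhdsWithin_le_nhds
  exact ge_of_tendsto lim (eventually_mem_nhdsWithin.mono window)

lemma expConv_le_integral (hδ : 0 < δ) (hf : Integrable f) (h0 : ∀ x, 0 ≤ f x) (x : ℝ) :
    expConv δ f x ≤ ∫ y, f y := by
  have ishift : Integrable fun σ => f (x - σ) := hf.comp_sub_left x
  have pointwise : expConv δ f x ≤ ∫ σ in Ioi 0, f (x - σ) := by
    refine integral_mono_of_nonneg (Eventually.of_forall fun σ => ?_) ishift.integrableOn ?_
    · exact mul_nonneg (Real.exp_pos _).le (h0 _)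
    · filter_upwards [ae_restrict_mem measurableSet_Ioi] with σ hσ
      refine mul_le_of_le_one_left (h0 _) (Real.exp_le_one_iff.2 ?_)
      nlinarith [mem_Ioi.1 hσ]
  rw [← integral_sub_left_eq_self f volume x]
  exact pointwise.trans (setIntegral_le_integral ishift (Eventually.of_forall fun σ => h0 _))

lemma mul_intervalIntegral_expConv_le (hδ : 0 < δ) (cf : Continuous f) (hB : ∀ x, |f x| ≤ B)
    (hf : Integrable f) (h0 : ∀ x, 0 ≤ f x) {α β : ℝ} (h : α ≤ β) :
    δ * ∫ x in α..β, expConv δ f x ≤ 2 * ∫ x, f x := by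
  have ftc := integral_eq_sub_of_hasDerivAt (a := α) (b := β)
    (fun x _ => hasDerivAt_expConv hδ cf hB x)
    ((continuous_highPass hδ cf hB).intervalIntegrable _ _)
  simp only [highPass] at ftc
  rw [intervalIntegral.integral_sub (cf.intervalIntegrable _ _)
    (((continuous_expConv hδ cf hB).const_mul δ).intervalIntegrable _ _),
    intervalIntegral.integral_const_mul] at ftc
  linarith [intervalIntegral_le_integral hf h0 h, expConv_le_integral hδ hf h0 α,
    expConv_nonneg (δ := δ) h0 β]

/-- A bound, independent of the cut-off, for the error committed by filtering in the energy law
`d/dt ∫v² = -∫vf`. -/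
noncomputable def filterError (n F : ℝ) : ℝ :=
  (1 + n) * F + n + (1 + n) ^ 2 + 2 * F ^ 2

lemma abs_highPass_mul_highPass_le {n' : ℝ} (hδ : 0 < δ) (hf : Integrable f) (h0 : ∀ x, 0 ≤ f x)
    {x : ℝ} (hvx : |v x| ≤ B) (hq : δ * |expConv δ v x| ≤ n') :
    |highPass δ v x * highPass δ f x| ≤
      (B + n') * f x + √δ * highPass δ v x ^ 2 + √δ * (∫ y, f y) * (δ * expConv δ f x) := by
  have hr : |highPass δ v x| ≤ B + n' := by
    refine (abs_sub _ _).trans (add_le_add hvx ?_)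
    rwa [abs_mul, abs_of_pos hδ]
  have : 0 < √δ := Real.sqrt_pos.2 hδ
  have hss : √δ * √δ = δ := Real.mul_self_sqrt hδ.le
  have hp0 := expConv_nonneg (δ := δ) h0 x
  have hp1 := expConv_le_integral hδ hf h0 x
  have hh : |highPass δ f x| ≤ f x + δ * expConv δ f x := by
    refine (abs_sub _ _).trans_eq ?_
    rw [abs_of_nonneg (h0 x), abs_of_nonneg (by positivity)]
  set r := highPass δ v x
  set p := expConv δ f x
  -- AM-GM: `δ|r|p ≤ √δ r² + √δ δ p²`
  have cross : |r| * (δ * p) ≤ √δ * r ^ 2 + √δ * (∫ y, f y) * (δ * p) := by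
    have square : 0 ≤ √δ * ((|r| - √δ * p) ^ 2 + r ^ 2 + δ * p ^ 2) := by positivity
    have expand : √δ * ((|r| - √δ * p) ^ 2 + r ^ 2 + δ * p ^ 2)
        = 2 * (√δ * r ^ 2 + √δ * p * (δ * p) - |r| * (δ * p)) := by
      linear_combination √δ * sq_abs r + (√δ * p ^ 2 - 2 * |r| * p) * hss
    have : √δ * p * (δ * p) ≤ √δ * (∫ y, f y) * (δ * p) := by gcongr
    linarith
  calc |r * highPass δ f x| ≤ |r| * (f x + δ * p) := by rw [abs_mul]; gcongr
    _ = |r| * f x + |r| * (δ * p) := by ring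
    _ ≤ (B + n') * f x + (√δ * r ^ 2 + √δ * (∫ y, f y) * (δ * p)) := by
        gcongr
        exact h0 x
    _ = _ := by ring

theorem abs_intervalIntegral_highPass_mul_highPass_le {D : ℝ} (hδ : 0 < δ) (cv : Continuous v)
    (hB : ∀ x, |v x| ≤ B) (iv : Integrable fun x => v x ^ 2) (hn : ∫ x, v x ^ 2 ≤ n)
    (cf : Continuous f) (hD : ∀ x, |f x| ≤ D) (hf : Integrable f) (h0 : ∀ x, 0 ≤ f x) {α β : ℝ}
    (h : α ≤ β) :
    |∫ x in α..β, highPass δ v x * highPass δ f x|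
      ≤ B * (∫ x, f x) + √δ * filterError n (∫ x, f x) := by
  set F := ∫ x, f x
  have cr := continuous_highPass hδ cv hB
  have cp := continuous_expConv hδ cf hD
  have hB0 : 0 ≤ B := (abs_nonneg _).trans (hB 0)
  have hF0 : 0 ≤ F := integral_nonneg h0
  have hn0 : 0 ≤ n := (integral_nonneg fun x => sq_nonneg _).trans hn
  have hq := mul_abs_expConv_le hδ iv hn
  have integrated := intervalIntegral.norm_integral_le_of_norm_le (μ := volume)
    (f := fun x => highPass δ v x * highPass δ f x) h
    (Eventually.of_forall fun x _ => abs_highPass_mul_highPass_le hδ hf h0 (hB x) (hq x))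
    (Continuous.intervalIntegrable (by fun_prop) _ _)
  refine integrated.trans ?_
  rw [intervalIntegral.integral_add (Continuous.intervalIntegrable (by fun_prop) _ _)
    (Continuous.intervalIntegrable (by fun_prop) _ _), intervalIntegral.integral_add
    (Continuous.intervalIntegrable (by fun_prop) _ _)
    (Continuous.intervalIntegrable (by fun_prop) _ _)]
  simp only [intervalIntegral.integral_const_mul]
  have boundary := mul_expConv_sq_le hδ iv hn α
  have first := intervalIntegral_le_integral hf h0 h
  have second := intervalIntegral_highPass_sq_le hδ cv hB iv h
  have third := mul_intervalIntegral_expConv_le hδ cf hD hf h0 h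
  calc (B + √δ * (1 + n)) * (∫ x in α..β, f x) + √δ * (∫ x in α..β, highPass δ v x ^ 2)
        + √δ * F * (δ * ∫ x in α..β, expConv δ f x)
      ≤ (B + √δ * (1 + n)) * F + √δ * (n + (1 + n) ^ 2) + √δ * F * (2 * F) := by
        gcongr
        linarith
    _ = B * F + √δ * filterError n F := by rw [filterError]; ring

end HighPassEstimates

lemma abs_window_energy_sub_le {γ a b α β K : ℝ} {q r h : ℝ → ℝ → ℝ} (hab : a ≤ b)
    (cq : Continuous fun p : ℝ × ℝ => q p.1 p.2) (cr : Continuous fun p : ℝ × ℝ => r p.1 p.2)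
    (ch : Continuous fun p : ℝ × ℝ => h p.1 p.2) (dq : ∀ τ x, HasDerivAt (q τ) (r τ x) x)
    (dr : ∀ τ ∈ Ioo a b, ∀ x, HasDerivAt (fun s => r s x) (γ * q τ x - h τ x / 2) τ)
    (hK : ∀ τ, |∫ x in α..β, r τ x * h τ x| ≤ K) :
    |(∫ x in α..β, r b x ^ 2) - ∫ x in α..β, r a x ^ 2|
      ≤ |γ| * (∫ τ in a..b, (q τ β ^ 2 + q τ α ^ 2)) + (b - a) * K := by
  have cqs (x : ℝ) : Continuous fun τ => q τ x := cq.uncurry_right x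
  have density (τ : ℝ) : ∫ x in α..β, 2 * r τ x * (γ * q τ x - h τ x / 2)
      = γ * (q τ β ^ 2 - q τ α ^ 2) - ∫ x in α..β, r τ x * h τ x := by
    have cqτ : Continuous (q τ) := cq.uncurry_left τ
    have crτ : Continuous (r τ) := cr.uncurry_left τ
    have chτ : Continuous (h τ) := ch.uncurry_left τ
    have dq2 (x : ℝ) : HasDerivAt (fun x => γ * q τ x ^ 2) (2 * γ * q τ x * r τ x) x := by
      refine (((dq τ x).fun_pow 2).const_mul γ).congr_deriv ?_
      simp only [Nat.cast_ofNat, Nat.add_one_sub_one, pow_one]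
      ring
    rw [mul_sub, ← integral_eq_sub_of_hasDerivAt (fun x _ => dq2 x)
      (Continuous.intervalIntegrable (by fun_prop) _ _), ← intervalIntegral.integral_sub
      (Continuous.intervalIntegrable (by fun_prop) _ _)
      (Continuous.intervalIntegrable (by fun_prop) _ _)]
    exact intervalIntegral.integral_congr fun x _ => by ring
  have rate (τ : ℝ) : ‖∫ x in α..β, 2 * r τ x * (γ * q τ x - h τ x / 2)‖
      ≤ |γ| * (q τ β ^ 2 + q τ α ^ 2) + K := by
    rw [density τ]
    refine (abs_sub _ _).trans (add_le_add ?_ (hK τ))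
    rw [abs_mul]
    refine mul_le_mul_of_nonneg_left ?_ (abs_nonneg γ)
    rw [abs_le]
    constructor <;> nlinarith [sq_nonneg (q τ β), sq_nonneg (q τ α)]
  rw [intervalIntegral_sub_eq_of_hasDerivAt (W := fun τ x => r τ x ^ 2)
    (Wt := fun τ x => 2 * r τ x * (γ * q τ x - h τ x / 2)) (by fun_prop) (by fun_prop) hab
    fun τ hτ x => by simpa using (dr τ hτ x).fun_pow 2]
  refine (intervalIntegral.norm_integral_le_of_norm_le (μ := volume) hab
    (Eventually.of_forall fun τ _ => rate τ)
    (Continuous.intervalIntegrable (by fun_prop) _ _)).trans_eq ?_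
  rw [intervalIntegral.integral_add (Continuous.intervalIntegrable (by fun_prop) _ _)
    intervalIntegrable_const, intervalIntegral.integral_const_mul, intervalIntegral.integral_const,
    smul_eq_mul]

/-- A flow of `u_t + u u_x = γ v`, `v_x = u` on the line, with `u` and `v` square-integrable, `v`
vanishing at infinity, and `u_x` bounded from below by `c`. Spatial regularity is required at the
times of `J` and the equation at the times of `I`, so that a flow may be frozen outside an
interval. The first derivative `u_x` is carried as a function `ux` of its own. -/
structure OHFlow (γ c : ℝ) (J I : Set ℝ) (u v ux : ℝ → ℝ → ℝ) : Prop where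
  continuousOn_u : ContinuousOn (fun p : ℝ × ℝ => u p.1 p.2) (J ×ˢ univ)
  continuousOn_v : ContinuousOn (fun p : ℝ × ℝ => v p.1 p.2) (J ×ˢ univ)
  continuousOn_ux : ContinuousOn (fun p : ℝ × ℝ => ux p.1 p.2) (J ×ˢ univ)
  hasDerivAt_u : ∀ t ∈ J, ∀ x, HasDerivAt (u t) (ux t x) x
  hasDerivAt_v : ∀ t ∈ J, ∀ x, HasDerivAt (v t) (u t x) x
  hasDerivAt_time : ∀ t ∈ I, ∀ x,
    HasDerivAt (fun s => u s x) (γ * v t x - u t x * ux t x) t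
  le_ux : ∀ t ∈ J, ∀ x, c ≤ ux t x
  integrable_sq_u : ∀ t ∈ J, Integrable fun x => u t x ^ 2
  integrable_sq_v : ∀ t ∈ J, Integrable fun x => v t x ^ 2
  tendsto_v_atTop : ∀ t ∈ J, Tendsto (v t) atTop (nhds 0)
  tendsto_v_atBot : ∀ t ∈ J, Tendsto (v t) atBot (nhds 0)

/-- The flux of the density `u²` under `u_t + u u_x = γ v`, `v_x = u`. -/
noncomputable def energyFlux (γ : ℝ) (u v : ℝ → ℝ → ℝ) (t x : ℝ) : ℝ :=
  γ * v t x ^ 2 - 2 / 3 * u t x ^ 3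

namespace OHFlow

variable {γ c a b B n Q δ R : ℝ} {J I : Set ℝ} {u v ux : ℝ → ℝ → ℝ}

lemma mono (h : OHFlow γ c J I u v ux) {J' I' : Set ℝ} (hJ : J' ⊆ J) (hI : I' ⊆ I) :
    OHFlow γ c J' I' u v ux where
  continuousOn_u := h.continuousOn_u.mono (prod_mono hJ Subset.rfl)
  continuousOn_v := h.continuousOn_v.mono (prod_mono hJ Subset.rfl)
  continuousOn_ux := h.continuousOn_ux.mono (prod_mono hJ Subset.rfl)
  hasDerivAt_u t ht := h.hasDerivAt_u t (hJ ht)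
  hasDerivAt_v t ht := h.hasDerivAt_v t (hJ ht)
  hasDerivAt_time t ht := h.hasDerivAt_time t (hI ht)
  le_ux t ht := h.le_ux t (hJ ht)
  integrable_sq_u t ht := h.integrable_sq_u t (hJ ht)
  integrable_sq_v t ht := h.integrable_sq_v t (hJ ht)
  tendsto_v_atTop t ht := h.tendsto_v_atTop t (hJ ht)
  tendsto_v_atBot t ht := h.tendsto_v_atBot t (hJ ht)

lemma clamp (hab : a ≤ b) (h : OHFlow γ c (Icc a b) (Ioo a b) u v ux) :
    OHFlow γ c univ (Ioo a b) (fun t => u (projIcc a b hab t)) (fun t => v (projIcc a b hab t))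
      (fun t => ux (projIcc a b hab t)) := by
  have continuousOn_clamp {w : ℝ → ℝ → ℝ}
      (hw : ContinuousOn (fun p : ℝ × ℝ => w p.1 p.2) (Icc a b ×ˢ univ)) :
      ContinuousOn (fun p : ℝ × ℝ => w (projIcc a b hab p.1) p.2) (univ ×ˢ univ) :=
    (hw.comp_continuous (f := fun p : ℝ × ℝ => ((projIcc a b hab p.1 : ℝ), p.2)) (by fun_prop)
      fun p => ⟨(projIcc a b hab p.1).2, mem_univ _⟩).continuousOn
  have clamp_mem (t : ℝ) : (projIcc a b hab t : ℝ) ∈ Icc a b := (projIcc a b hab t).2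
  refine
    { continuousOn_u := continuousOn_clamp h.continuousOn_u
      continuousOn_v := continuousOn_clamp h.continuousOn_v
      continuousOn_ux := continuousOn_clamp h.continuousOn_ux
      hasDerivAt_u := fun t _ => h.hasDerivAt_u _ (clamp_mem t)
      hasDerivAt_v := fun t _ => h.hasDerivAt_v _ (clamp_mem t)
      hasDerivAt_time := fun t ht x => ?_
      le_ux := fun t _ => h.le_ux _ (clamp_mem t)
      integrable_sq_u := fun t _ => h.integrable_sq_u _ (clamp_mem t)
      integrable_sq_v := fun t _ => h.integrable_sq_v _ (clamp_mem t)
      tendsto_v_atTop := fun t _ => h.tendsto_v_atTop _ (clamp_mem t)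
      tendsto_v_atBot := fun t _ => h.tendsto_v_atBot _ (clamp_mem t) }
  rw [projIcc_of_mem hab (Ioo_subset_Icc_self ht)]
  refine (h.hasDerivAt_time t ht x).congr_of_eventuallyEq ?_
  filter_upwards [Ioo_mem_nhds ht.1 ht.2] with s hs
  rw [projIcc_of_mem hab (Ioo_subset_Icc_self hs)]

section Slices

variable {t : ℝ}

lemma continuous_u_slice (h : OHFlow γ c J I u v ux) (ht : t ∈ J) : Continuous (u t) :=
  continuous_of_hasDerivAt (h.hasDerivAt_u t ht)

lemma continuous_v_slice (h : OHFlow γ c J I u v ux) (ht : t ∈ J) : Continuous (v t) :=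
  continuous_of_hasDerivAt (h.hasDerivAt_v t ht)

lemma two_mul_v_sq_le (h : OHFlow γ c J I u v ux) (ht : t ∈ J) (x : ℝ) :
    2 * v t x ^ 2 ≤ (∫ y, u t y ^ 2) + ∫ y, v t y ^ 2 :=
  two_mul_sq_le_integral_sq_add_integral_sq (h.continuous_u_slice ht) (h.hasDerivAt_v t ht)
    (h.integrable_sq_u t ht) (h.integrable_sq_v t ht) (h.tendsto_v_atTop t ht)
    (h.tendsto_v_atBot t ht) x

lemma tendsto_v_shift_atTop (h : OHFlow γ c J I u v ux) (ht : t ∈ J) (k : ℝ) :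
    Tendsto (fun x => v t (x + k)) atTop (nhds 0) :=
  (h.tendsto_v_atTop t ht).comp (tendsto_atTop_add_const_right _ k tendsto_id)

lemma tendsto_v_shift_atBot (h : OHFlow γ c J I u v ux) (ht : t ∈ J) (k : ℝ) :
    Tendsto (fun x => v t (x + k)) atBot (nhds 0) :=
  (h.tendsto_v_atBot t ht).comp (tendsto_atBot_add_const_right _ k tendsto_id)

lemma tendsto_u_atTop (h : OHFlow γ c J I u v ux) (ht : t ∈ J) : Tendsto (u t) atTop (nhds 0) :=
  tendsto_zero_of_le_deriv2 (h.hasDerivAt_v t ht) (h.hasDerivAt_u t ht) (h.le_ux t ht)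
    (h.tendsto_v_shift_atTop ht)

lemma tendsto_u_atBot (h : OHFlow γ c J I u v ux) (ht : t ∈ J) : Tendsto (u t) atBot (nhds 0) :=
  tendsto_zero_of_le_deriv2 (h.hasDerivAt_v t ht) (h.hasDerivAt_u t ht) (h.le_ux t ht)
    (h.tendsto_v_shift_atBot ht)

lemma abs_u_le (h : OHFlow γ c J I u v ux) (ht : t ∈ J) (hB : ∀ x, |v t x| ≤ B) (x : ℝ) :
    |u t x| ≤ 2 * B + |c| :=
  abs_le_of_le_deriv2 (h.hasDerivAt_v t ht) (h.hasDerivAt_u t ht) (h.le_ux t ht) hB x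

lemma abs_u_sq_le (h : OHFlow γ c J I u v ux) (ht : t ∈ J) (hB : ∀ x, |v t x| ≤ B) (x : ℝ) :
    |u t x ^ 2| ≤ (2 * B + |c|) ^ 2 := by
  rw [abs_pow]
  exact pow_le_pow_left₀ (abs_nonneg _) (h.abs_u_le ht hB x) 2

end Slices

section GlobalFlow

lemma continuous_u (h : OHFlow γ c univ I u v ux) : Continuous fun p : ℝ × ℝ => u p.1 p.2 := by
  simpa only [univ_prod_univ, continuousOn_univ] using h.continuousOn_u

lemma continuous_v (h : OHFlow γ c univ I u v ux) : Continuous fun p : ℝ × ℝ => v p.1 p.2 := by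
  simpa only [univ_prod_univ, continuousOn_univ] using h.continuousOn_v

lemma continuous_ux (h : OHFlow γ c univ I u v ux) : Continuous fun p : ℝ × ℝ => ux p.1 p.2 := by
  simpa only [univ_prod_univ, continuousOn_univ] using h.continuousOn_ux

lemma window_sq_sub_eq (h : OHFlow γ c univ (Ioo a b) u v ux) (hab : a ≤ b) (α β : ℝ) :
    (∫ x in α..β, u b x ^ 2) - ∫ x in α..β, u a x ^ 2
      = ∫ τ in a..b, (energyFlux γ u v τ β - energyFlux γ u v τ α) := by
  have cu := h.continuous_u
  have cv := h.continuous_v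
  have cux := h.continuous_ux
  rw [intervalIntegral_sub_eq_of_hasDerivAt (W := fun τ x => u τ x ^ 2)
    (Wt := fun τ x => 2 * u τ x * (γ * v τ x - u τ x * ux τ x)) (by fun_prop) (by fun_prop) hab
    fun τ hτ x => by simpa using (h.hasDerivAt_time τ hτ x).fun_pow 2]
  refine intervalIntegral.integral_congr fun τ _ => ?_
  have cuτ : Continuous (u τ) := cu.uncurry_left τ
  have cvτ : Continuous (v τ) := cv.uncurry_left τ
  have cuxτ : Continuous (ux τ) := cux.uncurry_left τ
  refine integral_eq_sub_of_hasDerivAt (fun x _ => ?_)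
    (Continuous.intervalIntegrable (by fun_prop) _ _)
  refine ((((h.hasDerivAt_v τ (mem_univ τ) x).fun_pow 2).const_mul γ).sub
    (((h.hasDerivAt_u τ (mem_univ τ) x).fun_pow 3).const_mul (2 / 3))).congr_deriv ?_
  push_cast
  ring

lemma continuous_energyFlux (h : OHFlow γ c univ I u v ux) :
    Continuous fun p : ℝ × ℝ => energyFlux γ u v p.1 p.2 :=
  ((h.continuous_v.pow 2).const_mul γ).sub ((h.continuous_u.pow 3).const_mul _)

lemma abs_energyFlux_le (h : OHFlow γ c univ I u v ux) (hB : ∀ τ x, |v τ x| ≤ B) (τ x : ℝ) :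
    |energyFlux γ u v τ x| ≤ |γ| * B ^ 2 + 2 / 3 * (2 * B + |c|) ^ 3 := by
  refine (abs_sub _ _).trans (add_le_add ?_ ?_)
  · rw [abs_mul, abs_pow]
    gcongr
    exact hB τ x
  · rw [abs_mul, abs_pow, abs_of_pos (by norm_num : (0 : ℝ) < 2 / 3)]
    gcongr
    exact h.abs_u_le (mem_univ τ) (hB τ) x

lemma tendsto_energyFlux {l : Filter ℝ} {t : ℝ} (hu : Tendsto (u t) l (nhds 0))
    (hv : Tendsto (v t) l (nhds 0)) : Tendsto (energyFlux γ u v t) l (nhds 0) := by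
  have := ((hv.pow 2).const_mul γ).sub ((hu.pow 3).const_mul (2 / 3))
  rwa [zero_pow two_ne_zero, zero_pow three_ne_zero, mul_zero, mul_zero, sub_zero] at this

lemma integral_u_sq_eq_of_global (h : OHFlow γ c univ (Ioo a b) u v ux) (hab : a ≤ b)
    (hB : ∀ τ x, |v τ x| ≤ B) : ∫ x, u b x ^ 2 = ∫ x, u a x ^ 2 := by
  have cF := h.continuous_energyFlux
  have flux : Tendsto (fun R => ∫ τ in a..b, (energyFlux γ u v τ R - energyFlux γ u v τ (-R)))
      atTop (nhds 0) := by
    refine tendsto_intervalIntegral_zero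
      (F := fun τ R => energyFlux γ u v τ R - energyFlux γ u v τ (-R))
      (cF.sub (cF.comp (by fun_prop : Continuous fun p : ℝ × ℝ => (p.1, -p.2))))
      (fun τ R => (abs_sub _ _).trans
        (add_le_add (h.abs_energyFlux_le hB τ R) (h.abs_energyFlux_le hB τ (-R))))
      (fun τ => ?_) a b
    have top : Tendsto (energyFlux γ u v τ) atTop (nhds 0) :=
      tendsto_energyFlux (h.tendsto_u_atTop (mem_univ τ)) (h.tendsto_v_atTop τ (mem_univ τ))
    have bot : Tendsto (energyFlux γ u v τ) atBot (nhds 0) :=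
      tendsto_energyFlux (h.tendsto_u_atBot (mem_univ τ)) (h.tendsto_v_atBot τ (mem_univ τ))
    simpa using top.sub (bot.comp tendsto_neg_atTop_atBot)
  have window := (tendsto_intervalIntegral_neg (h.integrable_sq_u b (mem_univ b))).sub
    (tendsto_intervalIntegral_neg (h.integrable_sq_u a (mem_univ a)))
  exact sub_eq_zero.1 (tendsto_nhds_unique
    (window.congr fun R => h.window_sq_sub_eq hab (-R) R) flux)

section Filtered

lemma continuous_expConv_v (h : OHFlow γ c univ I u v ux) (hδ : 0 < δ) (hB : ∀ τ x, |v τ x| ≤ B) :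
    Continuous fun p : ℝ × ℝ => expConv δ (v p.1) p.2 :=
  continuous_expConv_uncurry hδ h.continuous_v hB

lemma continuous_highPass_u_sq (h : OHFlow γ c univ I u v ux) (hδ : 0 < δ)
    (hB : ∀ τ x, |v τ x| ≤ B) :
    Continuous fun p : ℝ × ℝ => highPass δ (fun y => u p.1 y ^ 2) p.2 :=
  continuous_highPass_uncurry hδ (F := fun τ y => u τ y ^ 2) (h.continuous_u.pow 2)
    fun τ => h.abs_u_sq_le (mem_univ τ) (hB τ)

theorem hasDerivAt_highPass_v_time (h : OHFlow γ c univ (Ioo a b) u v ux) (hδ : 0 < δ)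
    (hB : ∀ τ x, |v τ x| ≤ B) {τ : ℝ} (hτ : τ ∈ Ioo a b) (x : ℝ) :
    HasDerivAt (fun s => highPass δ (v s) x)
      (γ * expConv δ (v τ) x - highPass δ (fun y => u τ y ^ 2) x / 2) τ := by
  have cu := h.continuous_u
  have cv := h.continuous_v
  have cux := h.continuous_ux
  have hD (τ x : ℝ) := h.abs_u_sq_le (mem_univ τ) (hB τ) x
  refine hasDerivAt_of_damped_transport (φ := u) (φt := fun τ x => γ * v τ x - u τ x * ux τ x)
    (r := fun τ => highPass δ (v τ))
    (G := fun τ x => γ * expConv δ (v τ) x - highPass δ (fun y => u τ y ^ 2) x / 2)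
    (B' := |γ| * (B / δ) + 2 * (2 * B + |c|) ^ 2 / 2) hδ cu (by fun_prop)
    (((h.continuous_expConv_v hδ hB).const_mul γ).sub
      ((h.continuous_highPass_u_sq hδ hB).div_const 2))
    h.hasDerivAt_time (fun τ => hasDerivAt_highPass hδ (h.hasDerivAt_v τ (mem_univ τ)) (hB τ))
    (fun τ x => ?_) (fun τ => abs_highPass_le hδ (hB τ)) (fun τ x => ?_) hτ x
  · have du2 (y : ℝ) : HasDerivAt (fun y => u τ y ^ 2) (2 * u τ y * ux τ y) y := by
      simpa using (h.hasDerivAt_u τ (mem_univ τ) y).fun_pow 2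
    refine (((hasDerivAt_expConv hδ (h.continuous_v_slice (mem_univ τ)) (hB τ) x).const_mul γ).sub
      ((hasDerivAt_highPass hδ du2 (hD τ) x).div_const 2)).congr_deriv ?_
    simp only [highPass]
    ring
  · refine (abs_sub _ _).trans (add_le_add ?_ ?_)
    · rw [abs_mul]
      gcongr
      exact abs_expConv_le hδ (hB τ) x
    · rw [abs_div, abs_two]
      gcongr
      exact abs_highPass_le hδ (hD τ) x

lemma abs_window_highPass_sq_sub_le (h : OHFlow γ c univ (Ioo a b) u v ux) (hab : a ≤ b)
    (hδ : 0 < δ) (hB : ∀ τ x, |v τ x| ≤ B) (hn : ∀ τ, ∫ x, v τ x ^ 2 ≤ n)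
    (hQ : ∀ τ, ∫ x, u τ x ^ 2 = Q) (hR : 0 ≤ R) :
    |(∫ x in (-R)..R, highPass δ (v b) x ^ 2) - ∫ x in (-R)..R, highPass δ (v a) x ^ 2|
      ≤ |γ| * (∫ τ in a..b, (expConv δ (v τ) R ^ 2 + expConv δ (v τ) (-R) ^ 2))
        + (b - a) * (B * Q + √δ * filterError n Q) := by
  refine abs_window_energy_sub_le (q := fun τ => expConv δ (v τ))
    (h := fun τ => highPass δ fun y => u τ y ^ 2) hab (h.continuous_expConv_v hδ hB)
    (continuous_highPass_uncurry hδ h.continuous_v hB) (h.continuous_highPass_u_sq hδ hB)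
    (fun τ => hasDerivAt_expConv hδ (h.continuous_v_slice (mem_univ τ)) (hB τ))
    (fun τ hτ => h.hasDerivAt_highPass_v_time hδ hB hτ) fun τ => ?_
  rw [← hQ τ]
  exact abs_intervalIntegral_highPass_mul_highPass_le hδ (h.continuous_v_slice (mem_univ τ)) (hB τ)
    (h.integrable_sq_v τ (mem_univ τ)) (hn τ) ((h.continuous_u_slice (mem_univ τ)).pow 2)
    (h.abs_u_sq_le (mem_univ τ) (hB τ)) (h.integrable_sq_u τ (mem_univ τ))
    (fun x => sq_nonneg _) (by linarith)

lemma tendsto_boundary_expConv_sq (h : OHFlow γ c univ I u v ux) (hδ : 0 < δ)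
    (hB : ∀ τ x, |v τ x| ≤ B) :
    Tendsto (fun R => ∫ τ in a..b, (expConv δ (v τ) R ^ 2 + expConv δ (v τ) (-R) ^ 2)) atTop
      (nhds 0) := by
  have cq := h.continuous_expConv_v hδ hB
  have cvs (τ : ℝ) : Continuous (v τ) := h.continuous_v_slice (mem_univ τ)
  refine tendsto_intervalIntegral_zero
    (F := fun τ R => expConv δ (v τ) R ^ 2 + expConv δ (v τ) (-R) ^ 2)
    (K := (B / δ) ^ 2 + (B / δ) ^ 2)
    ((cq.pow 2).add ((cq.comp (by fun_prop : Continuous fun p : ℝ × ℝ => (p.1, -p.2))).pow 2))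
    (fun τ R => (abs_add_le _ _).trans (add_le_add ?_ ?_)) (fun τ => ?_) a b
  · rw [abs_pow]
    exact pow_le_pow_left₀ (abs_nonneg _) (abs_expConv_le hδ (hB τ) R) 2
  · rw [abs_pow]
    exact pow_le_pow_left₀ (abs_nonneg _) (abs_expConv_le hδ (hB τ) (-R)) 2
  · have top := tendsto_expConv_zero hδ (cvs τ) (hB τ) fun σ =>
      h.tendsto_v_shift_atTop (mem_univ τ) (-σ)
    have bot := tendsto_expConv_zero hδ (cvs τ) (hB τ) fun σ =>
      h.tendsto_v_shift_atBot (mem_univ τ) (-σ)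
    simpa using (top.pow 2).add ((bot.comp tendsto_neg_atTop_atBot).pow 2)

lemma abs_integral_highPass_sq_sub_le (h : OHFlow γ c univ (Ioo a b) u v ux) (hab : a ≤ b)
    (hδ : 0 < δ) (hB : ∀ τ x, |v τ x| ≤ B) (hn : ∀ τ, ∫ x, v τ x ^ 2 ≤ n)
    (hQ : ∀ τ, ∫ x, u τ x ^ 2 = Q) :
    |(∫ x, highPass δ (v b) x ^ 2) - ∫ x, highPass δ (v a) x ^ 2|
      ≤ (b - a) * (B * Q + √δ * filterError n Q) := by
  have window (t : ℝ) := tendsto_intervalIntegral_neg (integrable_highPass_sq hδ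
    (h.continuous_v_slice (mem_univ t)) (hB t) (h.integrable_sq_v t (mem_univ t)))
  have boundary := ((h.tendsto_boundary_expConv_sq (a := a) (b := b) hδ hB).const_mul
    |γ|).add_const ((b - a) * (B * Q + √δ * filterError n Q))
  rw [mul_zero, zero_add] at boundary
  exact le_of_tendsto_of_tendsto ((window b).sub (window a)).abs boundary
    ((eventually_ge_atTop 0).mono fun R hR => h.abs_window_highPass_sq_sub_le hab hδ hB hn hQ hR)

end Filtered

lemma abs_integral_v_sq_sub_le_of_global (h : OHFlow γ c univ (Ioo a b) u v ux) (hab : a ≤ b)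
    (hB : ∀ τ x, |v τ x| ≤ B) (hn : ∀ τ, ∫ x, v τ x ^ 2 ≤ n) (hQ : ∀ τ, ∫ x, u τ x ^ 2 = Q) :
    |(∫ x, v b x ^ 2) - ∫ x, v a x ^ 2| ≤ (b - a) * (B * Q) := by
  have le_add {s t : ℝ} (hst : ∀ δ, 0 < δ →
      |(∫ x, highPass δ (v t) x ^ 2) - ∫ x, highPass δ (v s) x ^ 2|
        ≤ (b - a) * (B * Q + √δ * filterError n Q)) :
      ∫ x, v t x ^ 2 ≤ (∫ x, v s x ^ 2) + (b - a) * (B * Q) := by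
    refine integral_sq_le_of_integral_highPass_sq_le (M := (b - a) * filterError n Q)
      (h.continuous_v_slice (mem_univ t)) (hB t) (h.integrable_sq_v t (mem_univ t)) fun δ hδ => ?_
    have contraction := integral_highPass_sq_le hδ (h.continuous_v_slice (mem_univ s)) (hB s)
      (h.integrable_sq_v s (mem_univ s)) (h.tendsto_v_atBot s (mem_univ s))
    linarith [(le_abs_self _).trans (hst δ hδ)]
  have energy (δ : ℝ) (hδ : 0 < δ) := h.abs_integral_highPass_sq_sub_le hab hδ hB hn hQ
  rw [abs_le]
  constructor
  · linarith [le_add (s := b) (t := a) fun δ hδ => by rw [abs_sub_comm]; exact energy δ hδ]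
  · linarith [le_add energy]

end GlobalFlow

end OHFlow

/-- The phase-space norm `‖u(t)‖₂² + ‖v(t)‖₂²`. -/
noncomputable def sqNorm (u v : ℝ → ℝ → ℝ) (t : ℝ) : ℝ := (∫ x, u t x ^ 2) + ∫ x, v t x ^ 2

lemma integral_u_sq_nonneg (u : ℝ → ℝ → ℝ) (t : ℝ) : 0 ≤ ∫ x, u t x ^ 2 :=
  integral_nonneg fun _ => sq_nonneg _

lemma integral_u_sq_le_sqNorm (u v : ℝ → ℝ → ℝ) (t : ℝ) : ∫ x, u t x ^ 2 ≤ sqNorm u v t :=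
  le_add_of_nonneg_right (integral_u_sq_nonneg v t)

lemma integral_v_sq_le_sqNorm (u v : ℝ → ℝ → ℝ) (t : ℝ) : ∫ x, v t x ^ 2 ≤ sqNorm u v t :=
  le_add_of_nonneg_left (integral_u_sq_nonneg u t)

lemma sqNorm_nonneg (u v : ℝ → ℝ → ℝ) (t : ℝ) : 0 ≤ sqNorm u v t :=
  (integral_u_sq_nonneg u t).trans (integral_u_sq_le_sqNorm u v t)

namespace OHFlow

variable {γ c a b B n : ℝ} {J I : Set ℝ} {u v ux : ℝ → ℝ → ℝ}

lemma abs_v_le (h : OHFlow γ c J I u v ux) {t Y : ℝ} (ht : t ∈ J) (hY : sqNorm u v t ≤ Y) (x : ℝ) :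
    |v t x| ≤ √(Y / 2) := by
  refine Real.abs_le_sqrt ?_
  have sobolev := (h.two_mul_v_sq_le ht x).trans hY
  linarith

theorem integral_u_sq_eq (h : OHFlow γ c (Icc a b) (Ioo a b) u v ux)
    (hN : ∀ τ ∈ Icc a b, sqNorm u v τ ≤ n) {t : ℝ} (ht : t ∈ Icc a b) :
    ∫ x, u t x ^ 2 = ∫ x, u a x ^ 2 := by
  have sub : Icc a t ⊆ Icc a b := Icc_subset_Icc le_rfl ht.2
  have conserved :=
    ((h.mono sub (Ioo_subset_Ioo le_rfl ht.2)).clamp ht.1).integral_u_sq_eq_of_global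
      ht.1 (B := √(n / 2)) fun τ => h.abs_v_le (sub (projIcc a t ht.1 τ).2)
        (hN _ (sub (projIcc a t ht.1 τ).2))
  simpa only [projIcc_left, projIcc_right] using conserved

theorem abs_integral_v_sq_sub_le (h : OHFlow γ c (Icc a b) (Ioo a b) u v ux) (hab : a ≤ b)
    (hN : ∀ τ ∈ Icc a b, sqNorm u v τ ≤ n) (hB : ∀ τ ∈ Icc a b, ∀ x, |v τ x| ≤ B) :
    |(∫ x, v b x ^ 2) - ∫ x, v a x ^ 2| ≤ (b - a) * (B * ∫ x, u a x ^ 2) := by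
  have clamp_mem (τ : ℝ) : (projIcc a b hab τ : ℝ) ∈ Icc a b := (projIcc a b hab τ).2
  have energy := (h.clamp hab).abs_integral_v_sq_sub_le_of_global hab (fun τ => hB _ (clamp_mem τ))
    (fun τ => (integral_v_sq_le_sqNorm u v _).trans (hN _ (clamp_mem τ)))
    (fun τ => h.integral_u_sq_eq hN (clamp_mem τ))
  simpa only [projIcc_left, projIcc_right] using energy

lemma abs_integral_v_sq_sub_le_of_mem (h : OHFlow γ c (Icc a b) (Ioo a b) u v ux)
    (hN : ∀ τ ∈ Icc a b, sqNorm u v τ ≤ n) (hB : ∀ τ ∈ Icc a b, ∀ x, |v τ x| ≤ B) {s t : ℝ}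
    (hs : s ∈ Icc a b) (ht : t ∈ Icc a b) :
    |(∫ x, v t x ^ 2) - ∫ x, v s x ^ 2| ≤ |t - s| * (B * ∫ x, u a x ^ 2) := by
  wlog hst : s ≤ t generalizing s t
  · rw [abs_sub_comm, abs_sub_comm t s]
    exact this ht hs (le_of_not_ge hst)
  have sub : Icc s t ⊆ Icc a b := Icc_subset_Icc hs.1 ht.2
  rw [← h.integral_u_sq_eq hN hs, abs_of_nonneg (sub_nonneg.2 hst)]
  exact (h.mono sub (Ioo_subset_Ioo hs.1 ht.2)).abs_integral_v_sq_sub_le hst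
    (fun τ hτ => hN τ (sub hτ)) fun τ hτ => hB τ (sub hτ)

theorem integral_v_sq_le (h : OHFlow γ c (Icc a b) (Ioo a b) u v ux)
    (hN : ∀ τ ∈ Icc a b, sqNorm u v τ ≤ n) {s t : ℝ} (hs : s ∈ Icc a b) (ht : t ∈ Icc a b) :
    ∫ x, v t x ^ 2 ≤ 2 * ((∫ x, v s x ^ 2) + (b - a) ^ 2 * (∫ x, u a x ^ 2) ^ 2
      + ∫ x, u a x ^ 2) := by
  set Y : ℝ → ℝ := fun τ => ∫ x, v τ x ^ 2
  set Q := ∫ x, u a x ^ 2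
  set S := sSup (Y '' Icc a b)
  have bdd : BddAbove (Y '' Icc a b) :=
    ⟨n, forall_mem_image.2 fun τ hτ => (integral_v_sq_le_sqNorm u v τ).trans (hN τ hτ)⟩
  have le_S {τ : ℝ} (hτ : τ ∈ Icc a b) : Y τ ≤ S := le_csSup bdd (mem_image_of_mem Y hτ)
  have hQ0 : 0 ≤ Q := integral_u_sq_nonneg u a
  have hS0 : 0 ≤ S := (integral_u_sq_nonneg v s).trans (le_S hs)
  have hB (τ : ℝ) (hτ : τ ∈ Icc a b) : ∀ x, |v τ x| ≤ √((Q + S) / 2) :=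
    h.abs_v_le hτ (by rw [sqNorm, h.integral_u_sq_eq hN hτ]; exact add_le_add_right (le_S hτ) _)
  -- AM-GM: `L Q √((Q + S)/2) ≤ L² Q²/2 + (Q + S)/4` absorbs the supremum `S`
  have sup_le : S ≤ Y s + ((b - a) ^ 2 * Q ^ 2 / 2 + (Q + S) / 4) := by
    refine csSup_le ⟨_, mem_image_of_mem Y hs⟩ (forall_mem_image.2 fun τ hτ => ?_)
    have lip := (le_abs_self _).trans (h.abs_integral_v_sq_sub_le_of_mem hN hB hs hτ)
    have hlen : |τ - s| ≤ b - a := abs_le.2 ⟨by linarith [hτ.1, hs.2], by linarith [hτ.2, hs.1]⟩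
    have hmul : |τ - s| * (√((Q + S) / 2) * Q) ≤ (b - a) * (√((Q + S) / 2) * Q) := by gcongr
    have hsq : √((Q + S) / 2) ^ 2 = (Q + S) / 2 := Real.sq_sqrt (by positivity)
    nlinarith [sq_nonneg ((b - a) * Q - √((Q + S) / 2))]
  have : 0 ≤ Y s := integral_u_sq_nonneg v s
  have : 0 ≤ (b - a) ^ 2 * Q ^ 2 := by positivity
  linarith [le_S ht]

theorem sqNorm_le (h : OHFlow γ c (Icc a b) (Ioo a b) u v ux)
    (hN : ∀ τ ∈ Icc a b, sqNorm u v τ ≤ n) {k L s t : ℝ} (hs : s ∈ Icc a b) (ht : t ∈ Icc a b)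
    (hk : sqNorm u v s ≤ k) (hL : b - a ≤ L) : sqNorm u v t ≤ 5 * k + 2 * (L ^ 2 * k ^ 2) := by
  have hv := h.integral_v_sq_le hN hs ht
  have := integral_u_sq_nonneg u a
  have hQk : ∫ x, u a x ^ 2 ≤ k := by
    rw [← h.integral_u_sq_eq hN hs]
    exact (integral_u_sq_le_sqNorm u v s).trans hk
  have hY := (integral_v_sq_le_sqNorm u v s).trans hk
  have hab : 0 ≤ b - a := sub_nonneg.2 (hs.1.trans hs.2)
  have : (b - a) ^ 2 * (∫ x, u a x ^ 2) ^ 2 ≤ L ^ 2 * k ^ 2 := by gcongr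
  rw [sqNorm, h.integral_u_sq_eq hN ht]
  linarith

end OHFlow

section Baire

variable {X : Type*} [TopologicalSpace X] {N : X → ℝ}

lemma isOpen_setOf_isBoundedUnder_le (N : X → ℝ) :
    IsOpen {t | (nhds t).IsBoundedUnder (· ≤ ·) N} :=
  isOpen_iff_mem_nhds.2 fun _ ⟨m, hm⟩ =>
    (eventually_map.1 hm).eventually_nhds.mono fun _ hs => ⟨m, hs⟩

lemma exists_forall_le_of_isCompact {K : Set X} (hK : IsCompact K)
    (h : ∀ t ∈ K, (nhds t).IsBoundedUnder (· ≤ ·) N) : ∃ m, ∀ t ∈ K, N t ≤ m := by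
  refine hK.induction_on (p := fun s => ∃ m, ∀ t ∈ s, N t ≤ m) ⟨0, by simp⟩
    (fun s t hst ⟨m, hm⟩ => ⟨m, fun x hx => hm x (hst hx)⟩) ?_ ?_
  · rintro s t ⟨m, hm⟩ ⟨m', hm'⟩
    exact ⟨max m m', fun x hx => hx.elim (fun hx => le_max_of_le_left (hm x hx))
      fun hx => le_max_of_le_right (hm' x hx)⟩
  · intro t ht
    obtain ⟨m, hm⟩ := h t ht
    exact ⟨{s | N s ≤ m}, mem_nhdsWithin_of_mem_nhds (eventually_map.1 hm), m, fun _ hs => hs⟩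

theorem exists_isBoundedUnder_le_of_lowerSemicontinuousOn [LocallyCompactSpace X] [T2Space X]
    {S : Set X} (hS : IsLocallyClosed S) (hne : S.Nonempty) (hN : LowerSemicontinuousOn N S) :
    ∃ t ∈ S, (nhdsWithin t S).IsBoundedUnder (· ≤ ·) N := by
  have := hS.locallyCompactSpace
  have := hne.to_subtype
  have lsc : LowerSemicontinuous (S.domRestrict N) := lowerSemicontinuous_restrict_iff.2 hN
  obtain ⟨n, t, ht⟩ := nonempty_interior_of_iUnion_of_closed
    (f := fun n : ℕ => S.domRestrict N ⁻¹' Iic n) (fun n => lsc.isClosed_preimage n)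
    (eq_univ_of_forall fun t => mem_iUnion.2 (exists_nat_ge (N t)))
  have near : ∀ᶠ s : S in nhds t, N s ≤ n := mem_interior_iff_mem_nhds.1 ht
  exact ⟨t, t.2, n, eventually_map.2 ((eventually_nhds_subtype_iff S t (N · ≤ n)).1 near)⟩

lemma exists_isBoundedUnder_le_on_uIoo {N : ℝ → ℝ} {s t₀ : ℝ}
    (ht₀ : ¬(nhds t₀).IsBoundedUnder (· ≤ ·) N) :
    ∃ a ∈ uIcc t₀ s, ¬(nhds a).IsBoundedUnder (· ≤ ·) N ∧
      ∀ t ∈ uIoo a s, (nhds t).IsBoundedUnder (· ≤ ·) N := by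
  have closed : IsClosed {t | ¬(nhds t).IsBoundedUnder (· ≤ ·) N} :=
    (isOpen_setOf_isBoundedUnder_le N).isClosed_compl
  obtain ⟨a, ⟨ha, hbad⟩, hmin⟩ := (isCompact_uIcc.inter_right closed).exists_isMinOn
    (f := fun t => |t - s|) ⟨t₀, left_mem_uIcc, ht₀⟩ (by fun_prop)
  refine ⟨a, ha, hbad, fun t ht => ?_⟩
  by_contra htbad
  have closer : |t - s| < |a - s| := by
    rcases le_total a s with has | has
    · rw [uIoo_of_le has] at ht
      rw [abs_of_neg (by linarith [ht.2]), abs_of_nonpos (by linarith)]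
      linarith [ht.1]
    · rw [uIoo_of_ge has] at ht
      rw [abs_of_pos (by linarith [ht.1]), abs_of_nonneg (by linarith)]
      linarith [ht.2]
  exact closer.not_ge (hmin ⟨uIcc_subset_uIcc ha right_mem_uIcc (uIoo_subset_uIcc_self ht), htbad⟩)

/- By Baire's theorem `N` is bounded by some `n` on the closed set of bad times, where it is not
locally bounded, near one of them, `t₀`. Any other time near `t₀` is reached from the nearest bad
time through good times only, so `N` is bounded near `t₀` after all. -/
theorem isBoundedUnder_le_of_propagation {N : ℝ → ℝ} {U : Set ℝ} (hU : IsOpen U)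
    (hN : LowerSemicontinuousOn N U)
    (propagate : ∀ n, ∃ n', ∀ a s, uIcc a s ⊆ U →
      (∀ t ∈ uIoo a s, (nhds t).IsBoundedUnder (· ≤ ·) N) → N a ≤ n → N s ≤ n') {t : ℝ}
    (ht : t ∈ U) : (nhds t).IsBoundedUnder (· ≤ ·) N := by
  by_contra hbad
  have closed : IsClosed {t | ¬(nhds t).IsBoundedUnder (· ≤ ·) N} :=
    (isOpen_setOf_isBoundedUnder_le N).isClosed_compl
  obtain ⟨t₀, ⟨htU, ht₀⟩, n, hn⟩ := exists_isBoundedUnder_le_of_lowerSemicontinuousOn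
    (hU.isLocallyClosed.inter closed.isLocallyClosed) ⟨t, ht, hbad⟩ (hN.mono inter_subset_left)
  rw [eventually_map, eventually_nhdsWithin_iff] at hn
  obtain ⟨r, hr, ball_sub⟩ := Metric.mem_nhds_iff.1 (inter_mem hn (hU.mem_nhds htU))
  obtain ⟨n', hn'⟩ := propagate n
  refine ht₀ ⟨n', eventually_map.2 ?_⟩
  filter_upwards [Metric.ball_mem_nhds t₀ hr] with s hs
  have ord : OrdConnected (Metric.ball t₀ r) := by rw [Real.ball_eq_Ioo]; exact ordConnected_Ioo
  obtain ⟨a, ha, abad, good⟩ := exists_isBoundedUnder_le_on_uIoo (s := s) ht₀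
  have ha_ball : a ∈ Metric.ball t₀ r := ord.uIcc_subset (Metric.mem_ball_self hr) hs ha
  exact hn' a s (fun τ hτ => (ball_sub (ord.uIcc_subset ha_ball hs hτ)).2) good
    ((ball_sub ha_ball).1 ⟨(ball_sub ha_ball).2, abad⟩)

end Baire

namespace OHFlow

variable {γ c a b T : ℝ} {J I : Set ℝ} {u v ux : ℝ → ℝ → ℝ}

lemma lowerSemicontinuousOn_sqNorm (h : OHFlow γ c J I u v ux) :
    LowerSemicontinuousOn (sqNorm u v) J := by
  have sqNorm_eq {s : ℝ} (hs : s ∈ J) : sqNorm u v s = ∫ x, (u s x ^ 2 + v s x ^ 2) :=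
    (integral_add (h.integrable_sq_u s hs) (h.integrable_sq_v s hs)).symm
  have integrable {s : ℝ} (hs : s ∈ J) : Integrable fun x => u s x ^ 2 + v s x ^ 2 :=
    (h.integrable_sq_u s hs).add (h.integrable_sq_v s hs)
  intro t ht y hy
  rw [sqNorm_eq ht] at hy
  obtain ⟨R, hyR, hR⟩ := (((tendsto_intervalIntegral_neg (integrable ht)).eventually_const_lt
    hy).and (eventually_ge_atTop 0)).exists
  have window := continuousOn_parametric_intervalIntegral (W := fun s x => u s x ^ 2 + v s x ^ 2)
    ((h.continuousOn_u.pow 2).add (h.continuousOn_v.pow 2)) (-R) R t ht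
  filter_upwards [window.eventually_const_lt hyR, self_mem_nhdsWithin] with s hs hsJ
  rw [sqNorm_eq hsJ]
  exact hs.trans_le (intervalIntegral_le_integral (integrable hsJ) (fun x => by positivity)
    (by linarith))

lemma sqNorm_le_of_isBoundedUnder (h : OHFlow γ c (Icc a b) (Ioo a b) u v ux)
    (hN : ∀ τ ∈ Icc a b, (nhds τ).IsBoundedUnder (· ≤ ·) (sqNorm u v)) {k L s t : ℝ}
    (hs : s ∈ Icc a b) (ht : t ∈ Icc a b) (hk : sqNorm u v s ≤ k) (hL : b - a ≤ L) :
    sqNorm u v t ≤ 5 * k + 2 * (L ^ 2 * k ^ 2) := by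
  obtain ⟨m, hm⟩ := exists_forall_le_of_isCompact isCompact_Icc hN
  exact h.sqNorm_le hm hs ht hk hL

lemma exists_sqNorm_le_Icc (h : OHFlow γ c (Icc a b) (Ioo a b) u v ux)
    (hN : ∀ τ ∈ Ioo a b, (nhds τ).IsBoundedUnder (· ≤ ·) (sqNorm u v)) :
    ∃ n, ∀ t ∈ Icc a b, sqNorm u v t ≤ n := by
  set m := (a + b) / 2 with hm
  set k := sqNorm u v m
  refine ⟨max (max (sqNorm u v a) (sqNorm u v b)) (5 * k + 2 * ((b - a) ^ 2 * k ^ 2)),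
    fun t ht => ?_⟩
  rcases ht.1.eq_or_lt with rfl | hat
  · exact le_max_of_le_left (le_max_left _ _)
  rcases ht.2.eq_or_lt with rfl | htb
  · exact le_max_of_le_left (le_max_right _ _)
  have sub : uIcc m t ⊆ Ioo a b :=
    ordConnected_Ioo.uIcc_subset ⟨by linarith, by linarith⟩ ⟨hat, htb⟩
  have sub' : Ioo (min m t) (max m t) ⊆ Ioo a b := Ioo_subset_Icc_self.trans sub
  have h' := h.mono (sub.trans Ioo_subset_Icc_self) sub'
  refine le_max_of_le_right (h'.sqNorm_le_of_isBoundedUnder (fun τ hτ => hN τ (sub hτ))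
    left_mem_uIcc right_mem_uIcc le_rfl ?_)
  rw [max_sub_min_eq_abs, abs_le]
  constructor <;> linarith

lemma sqNorm_propagation (h : OHFlow γ c (Ioo 0 T) (Ioo 0 T) u v ux) {n s t : ℝ}
    (hst : uIcc s t ⊆ Ioo 0 T)
    (hN : ∀ τ ∈ uIoo s t, (nhds τ).IsBoundedUnder (· ≤ ·) (sqNorm u v)) (hs : sqNorm u v s ≤ n) :
    sqNorm u v t ≤ 5 * n + 2 * (T ^ 2 * n ^ 2) := by
  have h' := h.mono hst (uIoo_subset_uIcc_self.trans hst)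
  obtain ⟨m, hm⟩ := h'.exists_sqNorm_le_Icc hN
  refine h'.sqNorm_le hm left_mem_uIcc right_mem_uIcc hs ?_
  have hsT := hst left_mem_uIcc
  have htT := hst right_mem_uIcc
  rw [max_sub_min_eq_abs, abs_le]
  constructor <;> linarith [hsT.1, hsT.2, htT.1, htT.2]

theorem exists_sqNorm_le (h : OHFlow γ c (Ioo 0 T) (Ioo 0 T) u v ux) (hb : b < T) :
    ∃ n, ∀ t ∈ Ioc 0 b, sqNorm u v t ≤ n := by
  have bounded {t : ℝ} (ht : t ∈ Ioo 0 T) : (nhds t).IsBoundedUnder (· ≤ ·) (sqNorm u v) :=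
    isBoundedUnder_le_of_propagation isOpen_Ioo h.lowerSemicontinuousOn_sqNorm
      (fun _ => ⟨_, fun _ _ => h.sqNorm_propagation⟩) ht
  refine ⟨5 * sqNorm u v b + 2 * (b ^ 2 * sqNorm u v b ^ 2), fun t ht => ?_⟩
  have sub : Icc t b ⊆ Ioo 0 T := fun τ hτ => ⟨ht.1.trans_le hτ.1, hτ.2.trans_lt hb⟩
  exact (h.mono sub (Ioo_subset_Icc_self.trans sub)).sqNorm_le_of_isBoundedUnder
    (fun τ hτ => bounded (sub hτ)) (right_mem_Icc.2 ht.2) (left_mem_Icc.2 ht.2) le_rfl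
    (by linarith [ht.1])

end OHFlow

theorem le_add_mul_sq_of_growth_le {Z : ℝ → ℝ} {b R κ k : ℝ} (hR : 0 < R) (hκ : 0 < κ)
    (hk : κ < 2 * k) (cZ : ContinuousOn Z (Icc 0 b)) (hZ0 : Z 0 ≤ R ^ 2)
    (growth : ∀ s ∈ Icc 0 b, ∀ t ∈ Icc 0 b, s ≤ t → ∀ B, (∀ τ ∈ Icc s t, √(Z τ) ≤ B) →
      Z t ≤ Z s + (t - s) * (κ * B)) {t : ℝ} (ht : t ∈ Icc 0 b) : Z t ≤ (R + k * t) ^ 2 := by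
  refine image_le_of_liminf_slope_right_lt_deriv_boundary (f := Z) (f' := fun t => κ * √(Z t))
    (B := fun t => (R + k * t) ^ 2) (B' := fun t => 2 * k * (R + k * t)) cZ ?_
    (by simpa using hZ0) ?_ ?_ ht
  · intro x hx r hr
    obtain ⟨B, hxB, hBr⟩ := exists_between ((lt_div_iff₀' hκ).2 hr)
    have hxI : x ∈ Icc 0 b := Ico_subset_Icc_self hx
    have near : ∀ᶠ τ in nhdsWithin x (Ici x), √(Z τ) < B := by
      have : ContinuousWithinAt (fun τ => √(Z τ)) (Icc x b) x :=
        (cZ.sqrt x hxI).mono (Icc_subset_Icc_left hx.1)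
      rw [← nhdsWithin_Icc_eq_nhdsGE hx.2]
      exact this.eventually_lt_const hxB
    obtain ⟨y, hxy, hy⟩ := mem_nhdsGE_iff_exists_Ico_subset.1 near
    refine Eventually.frequently ?_
    filter_upwards [Ioo_mem_nhdsGT (lt_min hxy hx.2)] with z hz
    have hzy := lt_min_iff.1 hz.2
    have grow := growth x hxI z ⟨hx.1.trans hz.1.le, hzy.2.le⟩ hz.1.le B
      fun τ hτ => le_of_lt (hy ⟨hτ.1, hτ.2.trans_lt hzy.1⟩)
    have hxz : 0 < z - x := sub_pos.2 hz.1
    rw [slope_def_field, div_lt_iff₀ hxz]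
    have : (z - x) * (κ * B) < (z - x) * r := by
      gcongr
      exact (lt_div_iff₀' hκ).1 hBr
    linarith
  · intro x
    refine ((((hasDerivAt_id x).const_mul k).const_add R).fun_pow 2).congr_deriv ?_
    simp only [id, mul_one, Nat.cast_ofNat, Nat.add_one_sub_one, pow_one]
    ring
  · intro x hx hxe
    have hpos : 0 < R + k * x := by
      have := mul_nonneg (by linarith : 0 ≤ k) hx.1
      linarith
    rw [hxe, Real.sqrt_sq hpos.le]
    gcongr

namespace OHFlow

variable {γ c a b B n R : ℝ} {J I : Set ℝ} {u v ux : ℝ → ℝ → ℝ}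

lemma abs_gamma_mul_v_le (h : OHFlow γ c J I u v ux) (hγ : 0 < γ) {t : ℝ} (ht : t ∈ J) (x : ℝ) :
    |γ * v t x| ≤ √γ / √2 * √(γ * sqNorm u v t) := by
  have hv := h.abs_v_le ht le_rfl x
  calc |γ * v t x| ≤ γ * √(sqNorm u v t / 2) := by
        rw [abs_mul, abs_of_pos hγ]
        gcongr
    _ = √γ / √2 * √(γ * sqNorm u v t) := by
        rw [Real.sqrt_div (sqNorm_nonneg u v t), Real.sqrt_mul hγ.le]
        linear_combination (-(√(sqNorm u v t) / √2)) * Real.mul_self_sqrt hγ.le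

lemma sqNorm_le_add (h : OHFlow γ c (Icc a b) (Ioo a b) u v ux)
    (hN : ∀ τ ∈ Icc a b, sqNorm u v τ ≤ n) {s t : ℝ} (hs : s ∈ Icc a b) (ht : t ∈ Icc a b)
    (hst : s ≤ t) (hB : ∀ τ ∈ Icc s t, ∀ x, |v τ x| ≤ B) :
    sqNorm u v t ≤ sqNorm u v s + (t - s) * (B * ∫ x, u a x ^ 2) := by
  have sub : Icc s t ⊆ Icc a b := Icc_subset_Icc hs.1 ht.2
  have energy := (h.mono sub (Ioo_subset_Ioo hs.1 ht.2)).abs_integral_v_sq_sub_le hst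
    (fun τ hτ => hN τ (sub hτ)) hB
  rw [h.integral_u_sq_eq hN hs] at energy
  rw [sqNorm, sqNorm, h.integral_u_sq_eq hN hs, h.integral_u_sq_eq hN ht]
  linarith [(le_abs_self _).trans energy]

lemma continuousOn_sqNorm (h : OHFlow γ c (Icc a b) (Ioo a b) u v ux)
    (hN : ∀ τ ∈ Icc a b, sqNorm u v τ ≤ n) : ContinuousOn (sqNorm u v) (Icc a b) := by
  have hK : 0 ≤ √(n / 2) * ∫ x, u a x ^ 2 :=
    mul_nonneg (Real.sqrt_nonneg _) (integral_u_sq_nonneg u a)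
  refine (LipschitzOnWith.of_dist_le_mul (K := Real.toNNReal (√(n / 2) * ∫ x, u a x ^ 2))
    fun s hs t ht => ?_).continuousOn
  have lip := h.abs_integral_v_sq_sub_le_of_mem hN (fun τ hτ => h.abs_v_le hτ (hN τ hτ)) ht hs
  rw [Real.dist_eq, Real.dist_eq, sqNorm, sqNorm, h.integral_u_sq_eq hN hs,
    h.integral_u_sq_eq hN ht, add_sub_add_left_eq_sub, Real.coe_toNNReal _ hK]
  linarith

theorem gamma_mul_sqNorm_le (h : OHFlow γ c (Icc 0 b) (Ioo 0 b) u v ux) (hγ : 0 < γ)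
    (hN : ∀ τ ∈ Icc 0 b, sqNorm u v τ ≤ n) (hQ : 0 < ∫ x, u 0 x ^ 2) (hR : 0 < R)
    (hR0 : γ * sqNorm u v 0 ≤ R ^ 2) {t : ℝ} (ht : t ∈ Icc 0 b) :
    γ * sqNorm u v t ≤ (R + 2 / 3 * (∫ x, u 0 x ^ 2) * (√γ / √2) * t) ^ 2 := by
  set Q := ∫ x, u 0 x ^ 2
  set g := √γ / √2
  have hg0 : 0 < g := by positivity
  refine le_add_mul_sq_of_growth_le (Z := fun t => γ * sqNorm u v t) (κ := Q * g) hR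
    (by positivity) ?_ ((h.continuousOn_sqNorm hN).const_mul γ) hR0 ?_ ht
  · linarith [mul_pos hQ hg0]
  · intro s hs t ht hst B hB
    have hv (τ : ℝ) (hτ : τ ∈ Icc s t) (x : ℝ) : |v τ x| ≤ g * B / γ := by
      have sobolev := h.abs_gamma_mul_v_le hγ (Icc_subset_Icc hs.1 ht.2 hτ) x
      rw [abs_mul, abs_of_pos hγ] at sobolev
      rw [le_div_iff₀' hγ]
      exact sobolev.trans (mul_le_mul_of_nonneg_left (hB τ hτ) hg0.le)
    calc γ * sqNorm u v t ≤ γ * (sqNorm u v s + (t - s) * (g * B / γ * Q)) := by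
          gcongr
          exact h.sqNorm_le_add hN hs ht hst hv
      _ = γ * sqNorm u v s + (t - s) * (Q * g * B) := by field_simp

theorem abs_gamma_mul_v_le_linear (h : OHFlow γ c (Icc 0 b) (Ioo 0 b) u v ux) (hγ : 0 < γ)
    (hN : ∀ τ ∈ Icc 0 b, sqNorm u v τ ≤ n) (hQ : 0 < ∫ x, u 0 x ^ 2) (hR : 0 < R)
    (hR0 : γ * sqNorm u v 0 ≤ R ^ 2) {t : ℝ} (ht : t ∈ Icc 0 b) (x : ℝ) :
    |γ * v t x| ≤ √γ / √2 * R + γ * (∫ x, u 0 x ^ 2) / 3 * t := by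
  set Q := ∫ x, u 0 x ^ 2
  have hg2 : (√γ / √2) ^ 2 = γ / 2 := by
    rw [div_pow, Real.sq_sqrt hγ.le, Real.sq_sqrt zero_le_two]
  have ht0 : 0 ≤ t := ht.1
  have hsqrt : √(γ * sqNorm u v t) ≤ R + 2 / 3 * Q * (√γ / √2) * t :=
    Real.sqrt_le_iff.2 ⟨by positivity, h.gamma_mul_sqNorm_le hγ hN hQ hR hR0 ht⟩
  calc |γ * v t x| ≤ √γ / √2 * √(γ * sqNorm u v t) := h.abs_gamma_mul_v_le hγ ht x
    _ ≤ √γ / √2 * (R + 2 / 3 * Q * (√γ / √2) * t) := by gcongr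
    _ = √γ / √2 * R + γ * Q / 3 * t := by linear_combination (2 / 3 * Q * t) * hg2

end OHFlow

lemma hasDerivAt_integral_Iic {f : ℝ → ℝ} (hf : Continuous f) (hint : Integrable f) (x : ℝ) :
    HasDerivAt (fun x => ∫ y in Iic x, f y) (f x) x := by
  have split : (fun x => ∫ y in Iic x, f y) =
      fun x => (∫ y in Iic (0 : ℝ), f y) + ∫ y in (0 : ℝ)..x, f y := by
    ext x
    rw [← integral_Iic_sub_Iic hint.integrableOn hint.integrableOn, add_sub_cancel]
  rw [split]
  exact (hf.integral_hasStrictDerivAt 0 x).hasDerivAt.const_add _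

lemma abs_integral_Iic_le {f : ℝ → ℝ} (hf : Integrable f) (x : ℝ) :
    |∫ y in Iic x, f y| ≤ ∫ y, |f y| :=
  abs_integral_le_integral_abs.trans
    (setIntegral_le_integral hf.abs (Eventually.of_forall fun _ => abs_nonneg _))

lemma eq_zero_of_intervalIntegral_add_sq_le {f : ℝ → ℝ} (hf : Continuous f)
    (hint : Integrable fun x => f x ^ 2) {k n : ℝ}
    (h : ∀ R : ℝ, 0 ≤ R → ∫ x in (-R)..R, (f x + k) ^ 2 ≤ n) : k = 0 := by
  set D := 2 * n + 2 * ∫ x, f x ^ 2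
  have bound {R : ℝ} (hR : 0 ≤ R) : 2 * R * k ^ 2 ≤ D :=
    calc 2 * R * k ^ 2 = ∫ _ in (-R)..R, k ^ 2 := by
          rw [intervalIntegral.integral_const, smul_eq_mul]; ring
      _ ≤ ∫ x in (-R)..R, (2 * (f x + k) ^ 2 + 2 * f x ^ 2) := by
          refine integral_mono_on (by linarith) (by simp)
            (Continuous.intervalIntegrable (by fun_prop) _ _) fun x _ => ?_
          nlinarith [sq_nonneg (2 * f x + k)]
      _ = 2 * (∫ x in (-R)..R, (f x + k) ^ 2) + 2 * ∫ x in (-R)..R, f x ^ 2 := by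
          rw [intervalIntegral.integral_add (Continuous.intervalIntegrable (by fun_prop) _ _)
            (Continuous.intervalIntegrable (by fun_prop) _ _),
            intervalIntegral.integral_const_mul, intervalIntegral.integral_const_mul]
      _ ≤ D := by
          have := h R hR
          have := intervalIntegral_le_integral hint (fun x => sq_nonneg (f x))
            (by linarith : -R ≤ R)
          linarith
  by_contra hk
  have large := bound (R := (|D| + 1) / k ^ 2) (by positivity)
  rw [mul_assoc, div_mul_cancel₀ _ (pow_ne_zero 2 hk)] at large
  linarith [le_abs_self D, abs_nonneg D]

/-- The potential `v(t,x) = ∫_{-∞}^x u(t,y) dy`. -/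
noncomputable def linePotential (u : ℝ → ℝ → ℝ) (t x : ℝ) : ℝ := ∫ y in Iic x, u t y

/-- The value `(u_t + u u_x) / γ` which the equation assigns to the potential. It agrees with
`linePotential u` along solutions, and unlike the latter it is jointly continuous by construction,
also at time `0`. -/
noncomputable def balancePotential (γ : ℝ) (u : ℝ → ℝ → ℝ) (t x : ℝ) : ℝ :=
  (deriv (fun s => u s x) t + u t x * deriv (u t) x) / γ

/-- A decaying classical solution on `[0,T)` whose potential is square-integrable and vanishes at
`±∞`, and whose slope is at least `c`. -/
structure IsDecayingOHSolution (γ c T : ℝ) (u : ℝ → ℝ → ℝ) : Prop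
    extends IsLineOHSolution γ (Ico 0 T) u where
  le_deriv : ∀ t ∈ Ico 0 T, ∀ x, c ≤ deriv (u t) x
  integrable_sq_potential : ∀ t ∈ Ico 0 T, Integrable fun x => linePotential u t x ^ 2
  tendsto_potential_atTop : ∀ t ∈ Ico 0 T, Tendsto (linePotential u t) atTop (nhds 0)
  tendsto_potential_atBot : ∀ t ∈ Ico 0 T, Tendsto (linePotential u t) atBot (nhds 0)

namespace IsDecayingOHSolution

variable {γ c T b t : ℝ} {u : ℝ → ℝ → ℝ}

lemma hasDerivAt (h : IsDecayingOHSolution γ c T u) (ht : t ∈ Ico 0 T) (x : ℝ) :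
    HasDerivAt (u t) (deriv (u t) x) x :=
  (h.diff_x t ht x).hasDerivAt

lemma continuous (h : IsDecayingOHSolution γ c T u) (ht : t ∈ Ico 0 T) : Continuous (u t) :=
  continuous_of_hasDerivAt (h.hasDerivAt ht)

lemma hasDerivAt_linePotential (h : IsDecayingOHSolution γ c T u) (ht : t ∈ Ico 0 T) (x : ℝ) :
    HasDerivAt (linePotential u t) (u t x) x :=
  hasDerivAt_integral_Iic (h.continuous ht) (h.integrable t ht) x

lemma linePotential_sub (h : IsDecayingOHSolution γ c T u) (ht : t ∈ Ico 0 T) (x y : ℝ) :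
    linePotential u t y - linePotential u t x = ∫ z in x..y, u t z :=
  integral_Iic_sub_Iic (h.integrable t ht).integrableOn (h.integrable t ht).integrableOn

lemma integrable_sq (h : IsDecayingOHSolution γ c T u) (ht : t ∈ Ico 0 T) :
    Integrable fun x => u t x ^ 2 := by
  have bounded := abs_le_of_le_deriv2 (h.hasDerivAt_linePotential ht) (h.hasDerivAt ht)
    (h.le_deriv t ht) (abs_integral_Iic_le (h.integrable t ht))
  simpa only [sq] using (h.integrable t ht).bdd_mul (h.continuous ht).aestronglyMeasurable
    (Eventually.of_forall bounded)

lemma continuousOn_balancePotential (h : IsDecayingOHSolution γ c T u) :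
    ContinuousOn (fun p : ℝ × ℝ => balancePotential γ u p.1 p.2) (Ico 0 T ×ˢ univ) :=
  (h.cont_ut.add (h.cont_u.mul h.cont_ux)).div_const _

lemma hasDerivAt_time (h : IsDecayingOHSolution γ c T u) (hγ : 0 < γ) (ht : t ∈ Ico 0 T) (x : ℝ) :
    HasDerivAt (fun s => u s x) (γ * balancePotential γ u t x - u t x * deriv (u t) x) t := by
  rw [balancePotential, mul_div_cancel₀ _ hγ.ne', add_sub_cancel_right]
  exact (h.diff_t t ht x).hasDerivAt

lemma balancePotential_eq_of_pos (h : IsDecayingOHSolution γ c T u) (hγ : 0 < γ)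
    (ht : t ∈ Ioo 0 T) : balancePotential γ u t = linePotential u t := by
  ext x
  rw [balancePotential, h.eqn t (Ioo_subset_Ico_self ht) ht.1 x, mul_div_cancel_left₀ _ hγ.ne',
    linePotential]

lemma ohFlow_of_eqOn (h : IsDecayingOHSolution γ c T u) (hγ : 0 < γ) {J : Set ℝ}
    (hJ : J ⊆ Ico 0 T) (hV : EqOn (balancePotential γ u) (linePotential u) J) :
    OHFlow γ c J J u (balancePotential γ u) fun t x => deriv (u t) x where
  continuousOn_u := h.cont_u.mono (prod_mono hJ Subset.rfl)
  continuousOn_v := h.continuousOn_balancePotential.mono (prod_mono hJ Subset.rfl)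
  continuousOn_ux := h.cont_ux.mono (prod_mono hJ Subset.rfl)
  hasDerivAt_u _ ht := h.hasDerivAt (hJ ht)
  hasDerivAt_v _ ht := hV ht ▸ h.hasDerivAt_linePotential (hJ ht)
  hasDerivAt_time _ ht := h.hasDerivAt_time hγ (hJ ht)
  le_ux t ht := h.le_deriv t (hJ ht)
  integrable_sq_u _ ht := h.integrable_sq (hJ ht)
  integrable_sq_v _ ht := hV ht ▸ h.integrable_sq_potential _ (hJ ht)
  tendsto_v_atTop _ ht := hV ht ▸ h.tendsto_potential_atTop _ (hJ ht)
  tendsto_v_atBot _ ht := hV ht ▸ h.tendsto_potential_atBot _ (hJ ht)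

lemma exists_sqNorm_le_of_pos (h : IsDecayingOHSolution γ c T u) (hγ : 0 < γ) (hb : b < T) :
    ∃ n, ∀ t ∈ Ioc 0 b, sqNorm u (balancePotential γ u) t ≤ n :=
  (h.ohFlow_of_eqOn hγ Ioo_subset_Ico_self
    fun _ => h.balancePotential_eq_of_pos hγ).exists_sqNorm_le hb

lemma balancePotential_sub (h : IsDecayingOHSolution γ c T u) (hγ : 0 < γ) (ht : t ∈ Ico 0 T)
    (x : ℝ) : balancePotential γ u t x - balancePotential γ u t 0 = ∫ y in (0 : ℝ)..x, u t y := by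
  have continuousOn_slice (y : ℝ) : ContinuousOn (fun t => balancePotential γ u t y) (Ico 0 T) :=
    h.continuousOn_balancePotential.comp (f := fun t : ℝ => (t, y)) (by fun_prop)
      fun t ht => ⟨ht, mem_univ _⟩
  refine EqOn.of_subset_closure (s := Ioo 0 T) (fun τ hτ => ?_)
    ((continuousOn_slice x).sub (continuousOn_slice 0))
    (continuousOn_parametric_intervalIntegral h.cont_u 0 x) Ioo_subset_Ico_self
    (closure_Ioo (ht.1.trans_lt ht.2).ne ▸ Ico_subset_Icc_self) ht
  rw [Pi.sub_apply, h.balancePotential_eq_of_pos hγ hτ]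
  exact h.linePotential_sub (Ioo_subset_Ico_self hτ) 0 x

lemma exists_intervalIntegral_balancePotential_zero_sq_le (h : IsDecayingOHSolution γ c T u)
    (hγ : 0 < γ) (hT : 0 < T) :
    ∃ n, ∀ R : ℝ, 0 ≤ R → ∫ x in (-R)..R, balancePotential γ u 0 x ^ 2 ≤ n := by
  obtain ⟨n, hn⟩ := h.exists_sqNorm_le_of_pos hγ (half_lt_self hT)
  refine ⟨n, fun R hR => ?_⟩
  have window := continuousOn_parametric_intervalIntegral
    (W := fun t x => balancePotential γ u t x ^ 2) (h.continuousOn_balancePotential.pow 2) (-R) R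
  have sub : Ioc 0 (T / 2) ⊆ Ioo 0 T := fun τ hτ => ⟨hτ.1, hτ.2.trans_lt (half_lt_self hT)⟩
  refine ((window 0 ⟨le_rfl, hT⟩).mono (sub.trans Ioo_subset_Ico_self)).closure_le ?_
    continuousWithinAt_const fun τ hτ => ?_
  · rw [closure_Ioc (half_pos hT).ne]
    exact ⟨le_rfl, (half_pos hT).le⟩
  · have hV := h.integrable_sq_potential τ (Ioo_subset_Ico_self (sub hτ))
    rw [← h.balancePotential_eq_of_pos hγ (sub hτ)] at hV
    exact (intervalIntegral_le_integral hV (fun _ => sq_nonneg _) (by linarith)).trans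
      ((integral_v_sq_le_sqNorm u _ τ).trans (hn τ hτ))

/-- At `t = 0` the equation is not assumed. By continuity both sides have the same `x`-derivative
there, and the constant by which they differ vanishes because both are square-integrable. -/
theorem balancePotential_eq (h : IsDecayingOHSolution γ c T u) (hγ : 0 < γ) (ht : t ∈ Ico 0 T) :
    balancePotential γ u t = linePotential u t := by
  rcases ht.1.eq_or_lt with rfl | hpos
  · set k := balancePotential γ u 0 0 - linePotential u 0 0 with hk
    have shift (x : ℝ) : balancePotential γ u 0 x = linePotential u 0 x + k := by
      linear_combination h.balancePotential_sub hγ ht x - h.linePotential_sub ht 0 x + hk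
    obtain ⟨n, hn⟩ := h.exists_intervalIntegral_balancePotential_zero_sq_le hγ ht.2
    have hk0 : k = 0 := eq_zero_of_intervalIntegral_add_sq_le
      (continuous_of_hasDerivAt (h.hasDerivAt_linePotential ht))
      (h.integrable_sq_potential 0 ht) (by simpa only [shift] using hn)
    ext x
    rw [shift, hk0, add_zero]
  · exact h.balancePotential_eq_of_pos hγ ⟨hpos, ht.2⟩

theorem ohFlow (h : IsDecayingOHSolution γ c T u) (hγ : 0 < γ) (hb : b < T) :
    OHFlow γ c (Icc 0 b) (Ioo 0 b) u (balancePotential γ u) fun t x => deriv (u t) x :=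
  (h.ohFlow_of_eqOn hγ Subset.rfl fun _ => h.balancePotential_eq hγ).mono
    (fun _ hτ => ⟨hτ.1, hτ.2.trans_lt hb⟩) fun _ hτ => ⟨hτ.1.le, hτ.2.trans hb⟩

theorem exists_sqNorm_le (h : IsDecayingOHSolution γ c T u) (hγ : 0 < γ) (hb : b < T) :
    ∃ n, ∀ t ∈ Icc 0 b, sqNorm u (balancePotential γ u) t ≤ n := by
  obtain ⟨n, hn⟩ := h.exists_sqNorm_le_of_pos hγ hb
  refine ⟨max (sqNorm u (balancePotential γ u) 0) n, fun t ht => ?_⟩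
  rcases ht.1.eq_or_lt with rfl | hpos
  · exact le_max_left _ _
  · exact le_max_of_le_right (hn t ⟨hpos, ht.2⟩)

end IsDecayingOHSolution

section Calculus

lemma monotoneOn_Icc_of_hasDerivAt_nonneg {f f' : ℝ → ℝ} {a b : ℝ} (cf : ContinuousOn f (Icc a b))
    (df : ∀ t ∈ Ioo a b, HasDerivAt f (f' t) t) (hf' : ∀ t ∈ Ioo a b, 0 ≤ f' t) :
    MonotoneOn f (Icc a b) := by
  refine monotoneOn_of_hasDerivWithinAt_nonneg (convex_Icc a b) cf (f' := f') ?_ ?_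
  · exact fun t ht => (df t (interior_Icc (a := a) ▸ ht)).hasDerivWithinAt
  · exact fun t ht => hf' t (interior_Icc (a := a) ▸ ht)

lemma le_quadratic_of_hasDerivAt_le {f f' : ℝ → ℝ} {b m C q : ℝ} (cf : ContinuousOn f (Icc 0 b))
    (df : ∀ t ∈ Ioo 0 b, HasDerivAt f (f' t) t) (hf' : ∀ t ∈ Ioo 0 b, f' t ≤ C + q / 3 * t)
    (h0 : f 0 ≤ m) {t : ℝ} (ht : t ∈ Icc 0 b) : f t ≤ m + C * t + q / 6 * t ^ 2 := by
  have dp (s : ℝ) : HasDerivAt (fun s => C * s + q / 6 * s ^ 2) (C + q / 3 * s) s := by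
    refine (((hasDerivAt_id s).const_mul C).fun_add
      (((hasDerivAt_id s).fun_pow 2).const_mul (q / 6))).congr_deriv ?_
    simp only [id, mul_one, Nat.cast_ofNat, Nat.add_one_sub_one, pow_one]
    ring
  have mono := monotoneOn_Icc_of_hasDerivAt_nonneg
    (f := fun s => C * s + q / 6 * s ^ 2 - f s) (ContinuousOn.sub (by fun_prop) cf)
    (fun s hs => (dp s).fun_sub (df s hs)) (fun s hs => sub_nonneg.2 (hf' s hs))
  have := mono ⟨le_rfl, ht.1.trans ht.2⟩ ht ht.1
  norm_num at this
  linarith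

lemma hasDerivAt_along_curve {F Ft Fx : ℝ → ℝ → ℝ} {I : Set ℝ} (hI : IsOpen I)
    (dt : ∀ t ∈ I, ∀ x, HasDerivAt (fun s => F s x) (Ft t x) t)
    (dx : ∀ t ∈ I, ∀ x, HasDerivAt (F t) (Fx t x) x)
    (cFt : ContinuousOn (fun p : ℝ × ℝ => Ft p.1 p.2) (I ×ˢ univ))
    (cFx : ContinuousOn (fun p : ℝ × ℝ => Fx p.1 p.2) (I ×ˢ univ))
    {X : ℝ → ℝ} {X' t : ℝ} (ht : t ∈ I) (hX : HasDerivAt X X' t) :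
    HasDerivAt (fun s => F s (X s)) (Ft t (X t) + Fx t (X t) * X') t := by
  have mem : I ×ˢ (univ : Set ℝ) ∈ nhds (t, X t) :=
    (hI.prod isOpen_univ).mem_nhds ⟨ht, mem_univ _⟩
  have toSpanSingleton_continuousAt {W : ℝ → ℝ → ℝ}
      (hW : ContinuousOn (fun p : ℝ × ℝ => W p.1 p.2) (I ×ˢ univ)) :
      ContinuousAt (fun p : ℝ × ℝ => ContinuousLinearMap.toSpanSingleton ℝ (W p.1 p.2)) (t, X t) :=
    (ContinuousLinearMap.toSpanSingletonCLE (𝕜 := ℝ) (E := ℝ)).continuous.continuousAt.comp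
      (hW.continuousAt mem)
  have total := hasStrictFDerivAt_uncurry_coprod (𝕜 := ℝ) (u := (t, X t)) (f := F)
    (f₁ := fun t x => ContinuousLinearMap.toSpanSingleton ℝ (Ft t x))
    (f₂ := fun t x => ContinuousLinearMap.toSpanSingleton ℝ (Fx t x))
    (by filter_upwards [mem] with p hp using (dt p.1 hp.1 p.2).hasFDerivAt)
    (by filter_upwards [mem] with p hp using (dx p.1 hp.1 p.2).hasFDerivAt)
    (toSpanSingleton_continuousAt cFt) (toSpanSingleton_continuousAt cFx)
  refine (total.hasFDerivAt.comp_hasDerivAt t ((hasDerivAt_id t).prodMk hX)).congr_deriv ?_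
  simp [Function.HasUncurry.uncurry, mul_comm]

/-- Interchange of `∂_t` and `∂_x`, by differentiating `U s = U a + ∫_a^s G` in `x`. -/
theorem hasDerivAt_time_of_hasDerivAt_space {U Ux G Gx : ℝ → ℝ → ℝ} {a b : ℝ}
    (cG : ContinuousOn (fun p : ℝ × ℝ => G p.1 p.2) (Icc a b ×ˢ univ))
    (cGx : ContinuousOn (fun p : ℝ × ℝ => Gx p.1 p.2) (Icc a b ×ˢ univ))
    (dU : ∀ t ∈ Icc a b, ∀ x, HasDerivAt (U t) (Ux t x) x)
    (dG : ∀ t ∈ Icc a b, ∀ x, HasDerivAt (G t) (Gx t x) x)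
    (dt : ∀ t ∈ Icc a b, ∀ x, HasDerivAt (fun s => U s x) (G t x) t) {t : ℝ} (ht : t ∈ Ioo a b)
    (x : ℝ) : HasDerivAt (fun s => Ux s x) (Gx t x) t := by
  have hab : a ≤ b := (ht.1.trans ht.2).le
  set π : ℝ → ℝ := fun τ => projIcc a b hab τ
  have π_mem (τ : ℝ) : π τ ∈ Icc a b := (projIcc a b hab τ).2
  have π_eq {τ : ℝ} (hτ : τ ∈ Icc a b) : π τ = τ := congrArg Subtype.val (projIcc_of_mem hab hτ)
  have continuous_clamp {W : ℝ → ℝ → ℝ}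
      (hW : ContinuousOn (fun p : ℝ × ℝ => W p.1 p.2) (Icc a b ×ˢ univ)) :
      Continuous fun p : ℝ × ℝ => W (π p.1) p.2 :=
    hW.comp_continuous (f := fun p : ℝ × ℝ => (π p.1, p.2)) (by fun_prop)
      fun p => ⟨π_mem p.1, mem_univ _⟩
  have U_eq {s : ℝ} (hs : s ∈ Icc a b) (y : ℝ) : U s y = U a y + ∫ τ in a..s, G (π τ) y := by
    rw [integral_eq_sub_of_hasDerivAt (f := fun s => U s y) ?_
      ((continuous_clamp cG).uncurry_right y |>.intervalIntegrable _ _), add_sub_cancel]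
    intro τ hτ
    rw [uIcc_of_le hs.1] at hτ
    have hτ' : τ ∈ Icc a b := ⟨hτ.1, hτ.2.trans hs.2⟩
    rw [π_eq hτ']
    exact dt τ hτ' y
  have Ux_eq {s : ℝ} (hs : s ∈ Icc a b) : Ux s x = Ux a x + ∫ τ in a..s, Gx (π τ) x := by
    have dint := hasDerivAt_intervalIntegral_of_continuous (continuous_clamp cG)
      (continuous_clamp cGx) (fun τ => dG _ (π_mem τ)) a s x
    exact (dU s hs x).unique (((dU a (left_mem_Icc.2 hab) x).add dint).congr_of_eventuallyEq
      (Eventually.of_forall (U_eq hs)))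
  have cGx_slice : Continuous fun τ => Gx (π τ) x := (continuous_clamp cGx).uncurry_right x
  have ftc := (cGx_slice.integral_hasStrictDerivAt a t).hasDerivAt
  rw [π_eq (Ioo_subset_Icc_self ht)] at ftc
  refine (ftc.const_add (Ux a x)).congr_of_eventuallyEq ?_
  filter_upwards [Ioo_mem_nhds ht.1 ht.2] with s hs using Ux_eq (Ioo_subset_Icc_self hs)

theorem exists_characteristic {U Ux : ℝ → ℝ → ℝ} {b L : ℝ} (hb : 0 ≤ b)
    (cU : ContinuousOn (fun p : ℝ × ℝ => U p.1 p.2) (Icc 0 b ×ˢ univ))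
    (cUx : ContinuousOn (fun p : ℝ × ℝ => Ux p.1 p.2) (Icc 0 b ×ˢ univ))
    (dU : ∀ t ∈ Icc 0 b, ∀ x, HasDerivAt (U t) (Ux t x) x)
    (hL : ∀ t ∈ Icc 0 b, ∀ x, |U t x| ≤ L) (x₀ : ℝ) :
    ∃ X : ℝ → ℝ, X 0 = x₀ ∧ ContinuousOn X (Icc 0 b) ∧
      ∀ t ∈ Ioo 0 b, HasDerivAt X (U t (X t)) t := by
  have hL0 : 0 ≤ L := (abs_nonneg _).trans (hL 0 ⟨le_rfl, hb⟩ 0)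
  obtain ⟨K, hK⟩ := ((isCompact_Icc (a := 0) (b := b)).prod
    (isCompact_closedBall x₀ (L * b))).exists_bound_of_continuousOn
      (cUx.mono (prod_mono Subset.rfl (subset_univ _)))
  have picard : IsPicardLindelof U (tmin := 0) (tmax := b) ⟨0, le_rfl, hb⟩ x₀
      ⟨L * b, by positivity⟩ 0 ⟨L, hL0⟩ (Real.toNNReal K) :=
    { lipschitzOnWith := fun t ht =>
        (convex_closedBall x₀ _).lipschitzOnWith_of_nnnorm_hasDerivWithin_le
          (fun x _ => (dU t ht x).hasDerivWithinAt) fun x hx =>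
            NNReal.coe_le_coe.1 ((hK (t, x) ⟨ht, hx⟩).trans (Real.le_coe_toNNReal K))
      continuousOn := fun x _ => cU.comp (f := fun t : ℝ => (t, x)) (by fun_prop)
        fun t ht => ⟨ht, mem_univ _⟩
      norm_le := fun t ht x _ => hL t ht x
      mul_max_le := by
        simp only [sub_zero, sub_self, NNReal.coe_zero, max_eq_left hb]
        exact le_rfl }
  obtain ⟨X, hX0, hX⟩ := picard.exists_eq_forall_mem_Icc_hasDerivWithinAt₀
  exact ⟨X, hX0, fun t ht => (hX t ht).continuousWithinAt, fun t ht =>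
    (hX t (Ioo_subset_Icc_self ht)).hasDerivAt (Icc_mem_nhds ht.1 ht.2)⟩

end Calculus

section Riccati

variable {z z' : ℝ → ℝ} {b l : ℝ}

lemma forall_lt_of_hasDerivAt_nonneg (cz : ContinuousOn z (Icc 0 b))
    (dz : ∀ t ∈ Ioo 0 b, HasDerivAt z (z' t) t) (hz' : ∀ t ∈ Ioo 0 b, l < z t → 0 ≤ z' t)
    (h0 : l < z 0) : ∀ t ∈ Icc 0 b, l < z t := by
  by_contra! ⟨t, ht, hzt⟩
  have compact : IsCompact (Icc 0 b ∩ z ⁻¹' Iic l) :=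
    isCompact_Icc.of_isClosed_subset (cz.preimage_isClosed_of_isClosed isClosed_Icc isClosed_Iic)
      inter_subset_left
  obtain ⟨s, ⟨hs, hzs⟩, first⟩ := compact.exists_isLeast ⟨t, ht, hzt⟩
  have above {r : ℝ} (hr : r ∈ Ioo 0 s) : l < z r :=
    lt_of_not_ge fun hzr => (first ⟨⟨hr.1.le, hr.2.le.trans hs.2⟩, hzr⟩).not_gt hr.2
  have sub : Ioo 0 s ⊆ Ioo 0 b := Ioo_subset_Ioo le_rfl hs.2
  have mono := monotoneOn_Icc_of_hasDerivAt_nonneg (cz.mono (Icc_subset_Icc le_rfl hs.2))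
    (fun r hr => dz r (sub hr)) fun r hr => hz' r (sub hr) (above hr)
  exact (h0.trans_le (mono ⟨le_rfl, hs.1⟩ ⟨hs.1, le_rfl⟩ hs.1)).not_ge hzs

lemma monotoneOn_riccati_quotient (hl : 0 < l) (cz : ContinuousOn z (Icc 0 b))
    (dz : ∀ t ∈ Ioo 0 b, HasDerivAt z (z' t) t) (hz' : ∀ t ∈ Ioo 0 b, z t ^ 2 - l ^ 2 ≤ z' t)
    (hz : ∀ t ∈ Icc 0 b, l < z t) :
    MonotoneOn (fun t => (z t - l) / (z t + l) * Real.exp (-(2 * l * t))) (Icc 0 b) := by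
  have pos {t : ℝ} (ht : t ∈ Icc 0 b) : 0 < z t + l := by linarith [hz t ht]
  refine monotoneOn_Icc_of_hasDerivAt_nonneg
    (f' := fun t => 2 * l * (z' t - (z t ^ 2 - l ^ 2)) / (z t + l) ^ 2 * Real.exp (-(2 * l * t)))
    (((cz.sub continuousOn_const).div (cz.add continuousOn_const) fun t ht => (pos ht).ne').mul
      (by fun_prop)) (fun t ht => ?_) fun t ht => ?_
  · have hne := (pos (Ioo_subset_Icc_self ht)).ne'
    have dexp := (((hasDerivAt_id t).const_mul (2 * l)).fun_neg).exp
    refine ((((dz t ht).sub_const l).fun_div ((dz t ht).add_const l) hne).fun_mul dexp).congr_deriv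
      ?_
    simp only [id]
    field_simp
    ring
  · have := sub_nonneg.2 (hz' t ht)
    have := pos (Ioo_subset_Icc_self ht)
    positivity

theorem exp_mul_le_of_riccati {ε K : ℝ} (hb : 0 ≤ b) (hl : 0 < l) (hε : 0 < ε)
    (cz : ContinuousOn z (Icc 0 b)) (dz : ∀ t ∈ Ioo 0 b, HasDerivAt z (z' t) t)
    (hz' : ∀ t ∈ Ioo 0 b, z t ^ 2 - l ^ 2 ≤ z' t) (hz0 : (1 + ε) * l ≤ z 0) (hK : z b ≤ K) :
    Real.exp (2 * l * b) * (K + l) ≤ (1 + 2 / ε) * (K - l) := by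
  have hεl : 0 < ε * l := by positivity
  have hz := forall_lt_of_hasDerivAt_nonneg cz dz
    (fun t ht hlt => (by nlinarith : 0 ≤ z t ^ 2 - l ^ 2).trans (hz' t ht))
    (by linarith : l < z 0)
  have mono := monotoneOn_riccati_quotient hl cz dz hz' hz (left_mem_Icc.2 hb)
    (right_mem_Icc.2 hb) hb
  simp only [mul_zero, neg_zero, Real.exp_zero, mul_one] at mono
  have := hz 0 (left_mem_Icc.2 hb)
  have hzbl := hz b (right_mem_Icc.2 hb)
  have initial : ε / (2 + ε) ≤ (z 0 - l) / (z 0 + l) := by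
    rw [div_le_div_iff₀ (by positivity) (by linarith)]
    linarith
  have final : (z b - l) / (z b + l) ≤ (K - l) / (K + l) := by
    rw [div_le_div_iff₀ (by linarith) (by linarith)]
    nlinarith
  have compare : ε / (2 + ε) ≤ (K - l) / (K + l) * Real.exp (-(2 * l * b)) :=
    initial.trans (mono.trans (mul_le_mul_of_nonneg_right final (Real.exp_pos _).le))
  rw [Real.exp_neg, ← div_eq_mul_inv, le_div_iff₀ (Real.exp_pos _), le_div_iff₀ (by linarith),
    mul_assoc, div_mul_eq_mul_div, div_le_iff₀ (by positivity)] at compare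
  rw [one_add_div hε.ne', div_mul_eq_mul_div, le_div_iff₀ hε]
  linarith

end Riccati

lemma continuousOn_along_curve {W : ℝ → ℝ → ℝ} {J : Set ℝ} {X : ℝ → ℝ}
    (hW : ContinuousOn (fun p : ℝ × ℝ => W p.1 p.2) (J ×ˢ univ)) (hX : ContinuousOn X J) :
    ContinuousOn (fun t => W t (X t)) J :=
  hW.comp (f := fun t : ℝ => (t, X t)) (continuousOn_id.prodMk hX) fun _ ht => ⟨ht, mem_univ _⟩

lemma mul_integral_sq_le_energy {f P : ℝ → ℝ} (hf : Continuous f)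
    (hf2 : Integrable fun x => f x ^ 2) (hP : Integrable fun x => P x ^ 2) {m : ℝ}
    (hm : ∀ x, |f x| ≤ m) (γ : ℝ) :
    γ * ∫ x, P x ^ 2 ≤
      (∫ x, (γ * P x ^ 2 + (1 / 3) * f x ^ 3)) + (1 / 3) * (∫ x, f x ^ 2) * m := by
  have hf3 : Integrable fun x => f x ^ 3 := by
    simpa only [pow_succ' _ 2] using
      hf2.bdd_mul hf.aestronglyMeasurable (Eventually.of_forall hm)
  have cubic : -(m * ∫ x, f x ^ 2) ≤ ∫ x, f x ^ 3 := by
    rw [← MeasureTheory.integral_const_mul, ← MeasureTheory.integral_neg]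
    refine integral_mono (hf2.const_mul m).neg hf3 fun x => ?_
    have : 0 ≤ (m + f x) * f x ^ 2 :=
      mul_nonneg (by linarith [neg_le_of_abs_le (hm x)]) (sq_nonneg _)
    linarith
  rw [MeasureTheory.integral_add (hP.const_mul γ) (hf3.const_mul _),
    MeasureTheory.integral_const_mul, MeasureTheory.integral_const_mul]
  linarith

lemma IsLineOHSolution.mono {γ : ℝ} {S S' : Set ℝ} {u : ℝ → ℝ → ℝ} (h : IsLineOHSolution γ S u)
    (hS : S' ⊆ S) : IsLineOHSolution γ S' u where
  diff_t t ht := h.diff_t t (hS ht)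
  diff_x t ht := h.diff_x t (hS ht)
  diff_xx t ht := h.diff_xx t (hS ht)
  cont_u := h.cont_u.mono (prod_mono hS Subset.rfl)
  cont_ut := h.cont_ut.mono (prod_mono hS Subset.rfl)
  cont_ux := h.cont_ux.mono (prod_mono hS Subset.rfl)
  cont_uxx := h.cont_uxx.mono (prod_mono hS Subset.rfl)
  integrable t ht := h.integrable t (hS ht)
  eqn t ht := h.eqn t (hS ht)

namespace IsDecayingOHSolution

variable {γ c T b t ε m C Q E M x₀ : ℝ} {u : ℝ → ℝ → ℝ} {X : ℝ → ℝ}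

lemma mono (h : IsDecayingOHSolution γ c T u) {T' : ℝ} (hT : T' ≤ T) :
    IsDecayingOHSolution γ c T' u where
  toIsLineOHSolution := h.toIsLineOHSolution.mono (Ico_subset_Ico le_rfl hT)
  le_deriv t ht := h.le_deriv t ⟨ht.1, ht.2.trans_le hT⟩
  integrable_sq_potential t ht := h.integrable_sq_potential t ⟨ht.1, ht.2.trans_le hT⟩
  tendsto_potential_atTop t ht := h.tendsto_potential_atTop t ⟨ht.1, ht.2.trans_le hT⟩
  tendsto_potential_atBot t ht := h.tendsto_potential_atBot t ⟨ht.1, ht.2.trans_le hT⟩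

lemma continuousOn_time_deriv (h : IsDecayingOHSolution γ c T u) :
    ContinuousOn (fun p : ℝ × ℝ => γ * balancePotential γ u p.1 p.2 -
      u p.1 p.2 * deriv (u p.1) p.2) (Ico 0 T ×ˢ univ) :=
  (continuousOn_const.mul h.continuousOn_balancePotential).sub (h.cont_u.mul h.cont_ux)

lemma continuousOn_time_deriv_deriv (h : IsDecayingOHSolution γ c T u) :
    ContinuousOn (fun p : ℝ × ℝ => γ * u p.1 p.2 - (deriv (u p.1) p.2 * deriv (u p.1) p.2 +
      u p.1 p.2 * deriv (deriv (u p.1)) p.2)) (Ico 0 T ×ˢ univ) :=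
  (continuousOn_const.mul h.cont_u).sub ((h.cont_ux.mul h.cont_ux).add (h.cont_u.mul h.cont_uxx))

lemma hasDerivAt_time_deriv (h : IsDecayingOHSolution γ c T u) (hγ : 0 < γ) (ht : t ∈ Ioo 0 T)
    (x : ℝ) : HasDerivAt (fun s => deriv (u s) x)
      (γ * u t x - (deriv (u t) x * deriv (u t) x + u t x * deriv (deriv (u t)) x)) t := by
  obtain ⟨b, htb, hbT⟩ := exists_between ht.2
  have sub : Icc 0 b ⊆ Ico 0 T := fun τ hτ => ⟨hτ.1, hτ.2.trans_lt hbT⟩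
  have dv {τ : ℝ} (hτ : τ ∈ Icc 0 b) (x : ℝ) : HasDerivAt (balancePotential γ u τ) (u τ x) x :=
    (h.ohFlow hγ hbT).hasDerivAt_v τ hτ x
  exact hasDerivAt_time_of_hasDerivAt_space
    (h.continuousOn_time_deriv.mono (prod_mono sub Subset.rfl))
    (h.continuousOn_time_deriv_deriv.mono (prod_mono sub Subset.rfl))
    (fun τ hτ => h.hasDerivAt (sub hτ))
    (fun τ hτ x => ((dv hτ x).const_mul γ).fun_sub
      ((h.hasDerivAt (sub hτ) x).fun_mul (h.diff_xx τ (sub hτ) x).hasDerivAt))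
    (fun τ hτ => h.hasDerivAt_time hγ (sub hτ)) ⟨ht.1, htb⟩ x

lemma hasDerivAt_along (h : IsDecayingOHSolution γ c T u) (hγ : 0 < γ) (ht : t ∈ Ioo 0 T)
    (hX : HasDerivAt X (u t (X t)) t) :
    HasDerivAt (fun s => u s (X s)) (γ * balancePotential γ u t (X t)) t := by
  have sub : Ioo 0 T ×ˢ (univ : Set ℝ) ⊆ Ico 0 T ×ˢ univ := prod_mono Ioo_subset_Ico_self Subset.rfl
  refine (hasDerivAt_along_curve isOpen_Ioo
    (fun τ hτ => h.hasDerivAt_time hγ (Ioo_subset_Ico_self hτ))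
    (fun τ hτ => h.hasDerivAt (Ioo_subset_Ico_self hτ)) (h.continuousOn_time_deriv.mono sub)
    (h.cont_ux.mono sub) ht hX).congr_deriv ?_
  ring

lemma hasDerivAt_deriv_along (h : IsDecayingOHSolution γ c T u) (hγ : 0 < γ) (ht : t ∈ Ioo 0 T)
    (hX : HasDerivAt X (u t (X t)) t) :
    HasDerivAt (fun s => deriv (u s) (X s)) (γ * u t (X t) - deriv (u t) (X t) ^ 2) t := by
  have sub : Ioo 0 T ×ˢ (univ : Set ℝ) ⊆ Ico 0 T ×ˢ univ := prod_mono Ioo_subset_Ico_self Subset.rfl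
  refine (hasDerivAt_along_curve (F := fun s => deriv (u s)) isOpen_Ioo
    (fun τ hτ => h.hasDerivAt_time_deriv hγ hτ)
    (fun τ hτ x => (h.diff_xx τ (Ioo_subset_Ico_self hτ) x).hasDerivAt)
    (h.continuousOn_time_deriv_deriv.mono sub) (h.cont_uxx.mono sub) ht hX).congr_deriv ?_
  ring

lemma exists_characteristic (h : IsDecayingOHSolution γ c T u) (hγ : 0 < γ) (hb0 : 0 ≤ b)
    (hb : b < T) (x₀ : ℝ) : ∃ X : ℝ → ℝ, X 0 = x₀ ∧ ContinuousOn X (Icc 0 b) ∧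
      ∀ t ∈ Ioo 0 b, HasDerivAt X (u t (X t)) t := by
  obtain ⟨n, hn⟩ := h.exists_sqNorm_le hγ hb
  have flow := h.ohFlow hγ hb
  exact _root_.exists_characteristic hb0 flow.continuousOn_u flow.continuousOn_ux flow.hasDerivAt_u
    (fun t ht => flow.abs_u_le ht (flow.abs_v_le ht (hn t ht))) x₀

theorem exp_mul_le_of_slope_le (h : IsDecayingOHSolution γ c T u) (hγ : 0 < γ) (hε : 0 < ε)
    (hb0 : 0 ≤ b) (hb : b < T) {q : ℝ} (hq : 0 ≤ q) (hC : 0 ≤ C) (hm : ∀ x, u 0 x ≤ m)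
    (hv : ∀ t ∈ Icc 0 b, ∀ x, γ * balancePotential γ u t x ≤ C + q / 3 * t)
    (hM : 0 < M) (hMb : m + C * b + q / 6 * b ^ 2 ≤ M)
    (hslope : deriv (u 0) x₀ ≤ -(1 + ε) * √γ * √M) :
    Real.exp (2 * (√γ * √M) * b) * (-c + √γ * √M) ≤ (1 + 2 / ε) * (-c - √γ * √M) := by
  obtain ⟨X, rfl, cX, dX⟩ := h.exists_characteristic hγ hb0 hb x₀
  have inT {t : ℝ} (ht : t ∈ Ioo 0 b) : t ∈ Ioo 0 T := ⟨ht.1, ht.2.trans hb⟩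
  have sub : Icc 0 b ×ˢ (univ : Set ℝ) ⊆ Ico 0 T ×ˢ univ :=
    prod_mono (fun τ hτ => ⟨hτ.1, hτ.2.trans_lt hb⟩) Subset.rfl
  have hu_le {t : ℝ} (ht : t ∈ Ioo 0 b) : u t (X t) ≤ M :=
    calc u t (X t) ≤ m + C * t + q / 6 * t ^ 2 :=
          le_quadratic_of_hasDerivAt_le (continuousOn_along_curve (h.cont_u.mono sub) cX)
            (fun s hs => h.hasDerivAt_along hγ (inT hs) (dX s hs))
            (fun s hs => hv s (Ioo_subset_Icc_self hs) _) (hm _) (Ioo_subset_Icc_self ht)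
      _ ≤ m + C * b + q / 6 * b ^ 2 := by
          have := ht.1.le
          have := ht.2.le
          gcongr
      _ ≤ M := hMb
  refine exp_mul_le_of_riccati (z := fun t => -deriv (u t) (X t)) hb0 (by positivity) hε
    (continuousOn_along_curve (W := fun t => deriv (u t)) (h.cont_ux.mono sub) cX).neg
    (fun t ht => (h.hasDerivAt_deriv_along hγ (inT ht) (dX t ht)).fun_neg) (fun t ht => ?_)
    (by linarith) (neg_le_neg (h.le_deriv b ⟨hb0, hb⟩ _))
  rw [mul_pow, Real.sq_sqrt hγ.le, Real.sq_sqrt hM.le]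
  linarith [mul_le_mul_of_nonneg_left (hu_le ht) hγ.le]

theorem two_mul_sqrt_mul_lt_log_of_potential_le (h : IsDecayingOHSolution γ c T u) (hγ : 0 < γ)
    (hε : 0 < ε) (hT : 0 < T) {q : ℝ} (hq : 0 ≤ q) (hC : 0 ≤ C) (hm : ∀ x, u 0 x ≤ m)
    (hv : ∀ t ∈ Ico 0 T, ∀ x, γ * balancePotential γ u t x ≤ C + q / 3 * t)
    (hM : 0 < M) (hMT : m + C * T + q / 6 * T ^ 2 ≤ M)
    (hslope : deriv (u 0) x₀ ≤ -(1 + ε) * √γ * √M) :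
    2 * √γ * T * √M < Real.log (1 + 2 / ε) := by
  set l := √γ * √M with hl_def
  have hl : 0 < l := by positivity
  have limit : Real.exp (2 * l * T) * (-c + l) ≤ (1 + 2 / ε) * (-c - l) := by
    have cont : Continuous fun b : ℝ => Real.exp (2 * l * b) * (-c + l) := by fun_prop
    refine le_of_tendsto (cont.continuousWithinAt (s := Iio T)) ?_
    filter_upwards [Ioo_mem_nhdsLT hT] with b hb
    refine h.exp_mul_le_of_slope_le hγ hε hb.1.le hb.2 hq hC hm
      (fun t ht => hv t ⟨ht.1, ht.2.trans_lt hb.2⟩) hM (le_trans ?_ hMT) hslope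
    have := hb.1.le
    have := hb.2.le
    gcongr
  have hε2 : 0 < 1 + 2 / ε := by positivity
  have hcl : 0 < -c + l := by
    rw [mul_assoc, ← hl_def] at hslope
    linarith [h.le_deriv 0 ⟨le_rfl, hT⟩ x₀, mul_pos hε hl]
  rw [show 2 * √γ * T * √M = 2 * l * T by rw [hl_def]; ring, Real.lt_log_iff_exp_lt hε2]
  refine lt_of_mul_lt_mul_right (limit.trans_lt ?_) hcl.le
  gcongr
  linarith

lemma mul_sqNorm_zero_le (h : IsDecayingOHSolution γ c T u) (hγ : 0 < γ) (hT : 0 < T)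
    (hm : ∀ x, |u 0 x| ≤ m) :
    γ * sqNorm u (balancePotential γ u) 0 ≤
      (∫ x, (γ * linePotential u 0 x ^ 2 + (1 / 3) * u 0 x ^ 3)) + γ * (∫ x, u 0 x ^ 2) +
        (1 / 3) * (∫ x, u 0 x ^ 2) * m := by
  have ht : (0 : ℝ) ∈ Ico 0 T := ⟨le_rfl, hT⟩
  rw [sqNorm, h.balancePotential_eq hγ ht, mul_add]
  linarith [mul_integral_sq_le_energy (h.continuous ht) (h.integrable_sq ht)
    (h.integrable_sq_potential 0 ht) hm γ]

lemma integral_sq_zero_pos (h : IsDecayingOHSolution γ c T u) (hT : 0 < T)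
    (hslope : deriv (u 0) x₀ ≠ 0) : 0 < ∫ x, u 0 x ^ 2 := by
  have ht : (0 : ℝ) ∈ Ico 0 T := ⟨le_rfl, hT⟩
  obtain ⟨x, hx⟩ : ∃ x, u 0 x ≠ 0 := by
    by_contra! hzero
    exact hslope (by rw [show u 0 = 0 from funext hzero, deriv_zero, Pi.zero_apply])
  exact integral_sq_pos (h.continuous ht) (h.integrable_sq ht) hx

lemma mul_balancePotential_le (h : IsDecayingOHSolution γ c T u) (hγ : 0 < γ)
    (hm : ∀ x, |u 0 x| ≤ m) (hQ : Q = ∫ x, u 0 x ^ 2) (hQ0 : 0 < Q)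
    (hE : E = ∫ x, (γ * linePotential u 0 x ^ 2 + (1 / 3) * u 0 x ^ 3)) (ht : t ∈ Ico 0 T) (x : ℝ) :
    γ * balancePotential γ u t x ≤ √γ / √2 * √(E + γ * Q + (1 / 3) * Q * m) + γ * Q / 3 * t := by
  subst hQ hE
  have hT : 0 < T := ht.1.trans_lt ht.2
  have hR0 := h.mul_sqNorm_zero_le hγ hT hm
  have hpos := (mul_pos hγ (hQ0.trans_le
    (integral_u_sq_le_sqNorm u (balancePotential γ u) 0))).trans_le hR0
  obtain ⟨n, hn⟩ := h.exists_sqNorm_le hγ ht.2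
  exact (le_abs_self _).trans ((h.ohFlow hγ ht.2).abs_gamma_mul_v_le_linear hγ hn hQ0
    (Real.sqrt_pos.2 hpos) (hR0.trans_eq (Real.sq_sqrt hpos.le).symm) ⟨ht.1, le_rfl⟩ x)

theorem two_mul_sqrt_mul_lt_log (h : IsDecayingOHSolution γ c T u) (hγ : 0 < γ) (hε : 0 < ε)
    (hT : 0 < T) (hm : ∀ x, |u 0 x| ≤ m) (hQ : Q = ∫ x, u 0 x ^ 2)
    (hE : E = ∫ x, (γ * linePotential u 0 x ^ 2 + (1 / 3) * u 0 x ^ 3))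
    (hC : C = √γ / √2 * √(E + γ * Q + (1 / 3) * Q * m))
    (hslope : deriv (u 0) x₀ ≤ -(1 + ε) * √γ * √(m + C * T + γ * Q / 6 * T ^ 2)) :
    2 * √γ * T * √(m + C * T + γ * Q / 6 * T ^ 2) < Real.log (1 + 2 / ε) := by
  rcases le_or_gt (m + C * T + γ * Q / 6 * T ^ 2) 0 with hM | hM
  · rw [Real.sqrt_eq_zero_of_nonpos hM, mul_zero]
    exact Real.log_pos (lt_add_of_pos_right 1 (by positivity))
  have hQ0 : 0 < Q := by
    refine hQ ▸ h.integral_sq_zero_pos hT (x₀ := x₀) (hslope.trans_lt ?_).ne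
    rw [neg_mul, neg_mul, neg_lt_zero]
    positivity
  exact h.two_mul_sqrt_mul_lt_log_of_potential_le hγ hε hT (by positivity) (hC ▸ by positivity)
    (fun x => (le_abs_self _).trans (hm x))
    (fun t ht x => hC ▸ h.mul_balancePotential_le hγ hm hQ hQ0 hE ht x) hM le_rfl hslope

end IsDecayingOHSolution

/-- wave breaking on the line via characteristics: under the stated
smallest-root and steep-slope conditions, every decaying classical solution on the
line with initial data `u₀`, square-integrable decaying antiderivative, and `u_x`
bounded from below on `[0,T) × ℝ`, has `T < T₁`. -/
theorem line_wave_breaking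
    (γ ε : ℝ) (hγ : 0 < γ) (hε : 0 < ε)
    (u₀ : ℝ → ℝ) (hreg : ContDiff ℝ 2 u₀)
    (hu₀L1 : MeasureTheory.Integrable u₀)
    (hu₀L2 : MeasureTheory.Integrable (fun x => (u₀ x) ^ 2))
    (hu₀Linf : BddAbove (Set.range fun x => |u₀ x|))
    (Q E C : ℝ)
    (hQ : Q = ∫ x : ℝ, (u₀ x) ^ 2)
    (hE : E = ∫ x : ℝ, (γ * (∫ y in Set.Iic x, u₀ y) ^ 2 + (1/3) * (u₀ x) ^ 3))
    (hC : C = Real.sqrt γ / Real.sqrt 2 *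
      Real.sqrt (E + γ * Q + (1/3) * Q * (⨆ y : ℝ, |u₀ y|)))
    (T₁ : ℝ) (hT₁pos : 0 < T₁)
    (hroot : 2 * Real.sqrt γ * T₁ *
        Real.sqrt ((⨆ y : ℝ, |u₀ y|) + C * T₁ + γ * Q / 6 * T₁ ^ 2)
      = Real.log (1 + 2 / ε))
    (hsmallest : ∀ T' : ℝ, 0 < T' →
      2 * Real.sqrt γ * T' *
          Real.sqrt ((⨆ y : ℝ, |u₀ y|) + C * T' + γ * Q / 6 * T' ^ 2)
        = Real.log (1 + 2 / ε) → T₁ ≤ T')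
    (x₀ : ℝ)
    (hslope : deriv u₀ x₀ ≤ -(1 + ε) * Real.sqrt γ *
      Real.sqrt ((⨆ y : ℝ, |u₀ y|) + C * T₁ + γ * Q / 6 * T₁ ^ 2)) :
    ∀ (T : ℝ) (u : ℝ → ℝ → ℝ),
      IsLineOHSolution γ (Set.Ico 0 T) u →
      u 0 = u₀ →
      (∀ t ∈ Set.Ico (0 : ℝ) T,
        MeasureTheory.Integrable (fun x => (∫ y in Set.Iic x, u t y) ^ 2) ∧
        Filter.Tendsto (fun x => ∫ y in Set.Iic x, u t y) Filter.atTop (nhds 0) ∧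
        Filter.Tendsto (fun x => ∫ y in Set.Iic x, u t y) Filter.atBot (nhds 0)) →
      (∃ c : ℝ, ∀ t ∈ Set.Ico (0 : ℝ) T, ∀ x : ℝ, c ≤ deriv (u t) x) →
      T < T₁ := by
  rintro T u hu rfl hpot ⟨c, hc⟩
  have h : IsDecayingOHSolution γ c T u :=
    { hu with
      le_deriv := hc
      integrable_sq_potential := fun t ht => (hpot t ht).1
      tendsto_potential_atTop := fun t ht => (hpot t ht).2.1
      tendsto_potential_atBot := fun t ht => (hpot t ht).2.2 }
  by_contra! hT
  exact ((h.mono hT).two_mul_sqrt_mul_lt_log hγ hε hT₁pos (le_ciSup hu₀Linf) hQ hE hC hslope).ne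
    hroot
end

section
/- Let γ > 0 and c ∈ ℝ. There is no nontrivial twice continuously differentiable function φ : ℝ → ℝ with lim_{|x|→∞} φ(x) = 0 and lim_{|x|→∞} φ'(x) = 0 that satisfies the traveling-wave equation (c − φ(x)) φ''(x) = (φ'(x))² − γ φ(x) for all x ∈ ℝ; that is, any such solution is identically zero. -/
open Filter

/-!
Write the equation as `((c - φ) φ')' = -γ φ` and multiply it by `(c - φ) φ'`: the quantity
`((c - φ) φ')² / 2 + γ (c φ² / 2 - φ³ / 3)` is constant. Since `φ` has a limit at `+∞`, its
derivative tends to `0` along some sequence of points going to `+∞`, so the constant is `0`.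
If `φ` is not identically zero, then `|φ|` attains a nonzero maximum. There `φ' = 0`, and the
conserved quantity forces `φ = 3 c / 2`. As `φ` also decays to `0`, it takes the intermediate
value `c`, at which the conserved quantity is `γ c³ / 6`. Hence `c = 0`, so the extremal value
`3 c / 2` is zero, a contradiction.
-/

open Set Topology

section Decay

variable {f f' : ℝ → ℝ}

theorem exists_seq_tendsto_atTop_hasDerivAt_tendsto_zero {l : ℝ}
    (hf : ∀ x, HasDerivAt f (f' x) x) (hl : Tendsto f atTop (𝓝 l)) :
    ∃ u : ℕ → ℝ, Tendsto u atTop atTop ∧ Tendsto (fun n ↦ f' (u n)) atTop (𝓝 0) := by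
  have hslope (n : ℕ) : ∃ x ∈ Ioo (n : ℝ) (n + 1), f' x = f (n + 1) - f n := by
    simpa using exists_hasDerivAt_eq_slope f f' (lt_add_one (n : ℝ))
      (fun x _ ↦ (hf x).continuousAt.continuousWithinAt) fun x _ ↦ hf x
  choose u hu hslope using hslope
  refine ⟨u, tendsto_atTop_mono (fun n ↦ (hu n).1.le) tendsto_natCast_atTop_atTop, ?_⟩
  have hleft : Tendsto (fun n : ℕ ↦ f n) atTop (𝓝 l) := hl.comp tendsto_natCast_atTop_atTop
  have hright : Tendsto (fun n : ℕ ↦ f (n + 1)) atTop (𝓝 l) :=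
    hl.comp (tendsto_atTop_add_const_right _ 1 tendsto_natCast_atTop_atTop)
  simpa only [hslope, sub_self] using hright.sub hleft

theorem exists_forall_norm_le_of_tendsto_cocompact_zero {X E : Type*} [TopologicalSpace X]
    [Nonempty X] [SeminormedAddCommGroup E] {g : X → E} (hg : Continuous g)
    (hlim : Tendsto g (cocompact X) (𝓝 0)) : ∃ m, ∀ x, ‖g x‖ ≤ ‖g m‖ := by
  by_cases hzero : ∀ x, ‖g x‖ = 0
  · simp [hzero]
  · obtain ⟨a, ha⟩ := not_forall.mp hzero
    exact hg.norm.exists_forall_ge' a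
      (hlim.norm.eventually_le_const (by simpa using (norm_nonneg (g a)).lt_of_ne' ha))

theorem isExtrFilter_of_isMaxFilter_abs {X G : Type*} [AddCommGroup G] [LinearOrder G]
    [IsOrderedAddMonoid G] {g : X → G} {l : Filter X} {m : X}
    (hm : IsMaxFilter (fun x ↦ |g x|) l m) : IsExtrFilter g l m := by
  rcases le_total 0 (g m) with hpos | hneg
  · exact .inr (hm.mono fun x hx ↦ (le_abs_self _).trans (hx.trans_eq (abs_of_nonneg hpos)))
  · exact .inl (hm.mono fun x hx ↦ neg_le_neg_iff.mp
      ((neg_le_abs _).trans (hx.trans_eq (abs_of_nonpos hneg))))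

theorem exists_ne_zero_hasDerivAt_eq_zero_of_tendsto_cocompact_zero
    (hf : ∀ x, HasDerivAt f (f' x) x) (hlim : Tendsto f (cocompact ℝ) (𝓝 0)) {a : ℝ}
    (ha : f a ≠ 0) : ∃ m, f m ≠ 0 ∧ f' m = 0 := by
  have hcont : Continuous f := continuous_iff_continuousAt.mpr fun x ↦ (hf x).continuousAt
  obtain ⟨m, hm⟩ := exists_forall_norm_le_of_tendsto_cocompact_zero hcont hlim
  have hextr : IsLocalExtr f m := isExtrFilter_of_isMaxFilter_abs (.of_forall hm)
  exact ⟨m, norm_pos_iff.mp ((norm_pos_iff.mpr ha).trans_le (hm a)),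
    hextr.hasDerivAt_eq_zero (hf m)⟩

theorem mem_range_of_tendsto_of_mem_uIcc {X α : Type*} [TopologicalSpace X] [PreconnectedSpace X]
    [LinearOrder α] [TopologicalSpace α] [OrderClosedTopology α] {l : Filter X} [NeBot l]
    {g : X → α} (hg : Continuous g) {v y : α} (hlim : Tendsto g l (𝓝 v)) {m : X}
    (hy : y ∈ uIcc v (g m)) (hne : y ≠ v) : y ∈ range g := by
  rw [← image_univ]
  have hl : l ≤ 𝓟 univ := by simp
  rcases mem_uIcc.mp hy with ⟨hvy, hym⟩ | ⟨hmy, hyv⟩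
  · exact isPreconnected_univ.intermediate_value_Ioc (mem_univ m) hl hg.continuousOn hlim
      ⟨hvy.lt_of_ne' hne, hym⟩
  · exact isPreconnected_univ.intermediate_value_Ico (mem_univ m) hl hg.continuousOn hlim
      ⟨hmy, hyv.lt_of_ne hne⟩

end Decay

section TravelingWave

/-- The first integral of the traveling-wave equation `(c - φ) φ'' = (φ')² - γ φ`, as a function
on the phase plane: `u` and `v` stand for the values of `φ` and `φ'`. -/
noncomputable def firstIntegral (γ c u v : ℝ) : ℝ :=
  ((c - u) * v) ^ 2 / 2 + γ * (c * u ^ 2 / 2 - u ^ 3 / 3)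

variable {γ c : ℝ}

theorem continuous_firstIntegral : Continuous fun p : ℝ × ℝ ↦ firstIntegral γ c p.1 p.2 := by
  unfold firstIntegral
  fun_prop

theorem firstIntegral_zero_zero : firstIntegral γ c 0 0 = 0 := by
  simp [firstIntegral]

theorem firstIntegral_self_left (v : ℝ) : firstIntegral γ c c v = γ * c ^ 3 / 6 := by
  unfold firstIntegral
  ring

theorem eq_three_mul_div_two_of_firstIntegral_eq_zero (hγ : γ ≠ 0) {u : ℝ} (hu : u ≠ 0)
    (h : firstIntegral γ c u 0 = 0) : u = 3 * c / 2 := by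
  have hfactor : γ * u ^ 2 * (c / 2 - u / 3) = 0 := by
    rw [← h, firstIntegral]
    ring
  have hroot : c / 2 - u / 3 = 0 :=
    (mul_eq_zero.mp hfactor).resolve_left (mul_ne_zero hγ (pow_ne_zero 2 hu))
  linarith

variable {φ φ' φ'' : ℝ → ℝ}

theorem hasDerivAt_firstIntegral {x a : ℝ} (hφ : HasDerivAt φ (φ' x) x)
    (hφ' : HasDerivAt φ' a x) :
    HasDerivAt (fun y ↦ firstIntegral γ c (φ y) (φ' y))
      ((c - φ x) * φ' x * ((c - φ x) * a - (φ' x ^ 2 - γ * φ x))) x := by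
  have hkinetic := (((hφ.const_sub c).mul hφ').pow 2).div_const 2
  have hpotential := ((((hφ.pow 2).const_mul c).div_const 2).sub
    ((hφ.pow 3).div_const 3)).const_mul γ
  refine (hkinetic.add hpotential).congr_deriv ?_
  simp only [Pi.mul_apply]
  push_cast
  ring

theorem firstIntegral_eq_firstIntegral (hφ : ∀ x, HasDerivAt φ (φ' x) x)
    (hφ' : ∀ x, HasDerivAt φ' (φ'' x) x)
    (heq : ∀ x, (c - φ x) * φ'' x = φ' x ^ 2 - γ * φ x) (x y : ℝ) :
    firstIntegral γ c (φ x) (φ' x) = firstIntegral γ c (φ y) (φ' y) := by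
  have hderiv (z : ℝ) : HasDerivAt (fun w ↦ firstIntegral γ c (φ w) (φ' w)) 0 z := by
    simpa [heq z] using hasDerivAt_firstIntegral (γ := γ) (c := c) (hφ z) (hφ' z)
  exact is_const_of_deriv_eq_zero (fun z ↦ (hderiv z).differentiableAt)
    (fun z ↦ (hderiv z).deriv) x y

theorem firstIntegral_eq_zero_of_tendsto_atTop (hφ : ∀ x, HasDerivAt φ (φ' x) x)
    (hφ' : ∀ x, HasDerivAt φ' (φ'' x) x)
    (heq : ∀ x, (c - φ x) * φ'' x = φ' x ^ 2 - γ * φ x) (hlim : Tendsto φ atTop (𝓝 0)) (x : ℝ) :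
    firstIntegral γ c (φ x) (φ' x) = 0 := by
  obtain ⟨u, hu, hu'⟩ := exists_seq_tendsto_atTop_hasDerivAt_tendsto_zero hφ hlim
  have hzero : Tendsto (fun n ↦ firstIntegral γ c (φ (u n)) (φ' (u n))) atTop (𝓝 0) := by
    simpa only [Function.comp_def, firstIntegral_zero_zero] using
      (continuous_firstIntegral (γ := γ) (c := c)).tendsto (0, 0) |>.comp
        ((hlim.comp hu).prodMk_nhds hu')
  simp only [fun n ↦ firstIntegral_eq_firstIntegral hφ hφ' heq (u n) x] at hzero
  exact tendsto_nhds_unique tendsto_const_nhds hzero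

theorem no_localized_traveling_wave_general (hγ : γ ≠ 0) (hφ : ∀ x, HasDerivAt φ (φ' x) x)
    (hφ' : ∀ x, HasDerivAt φ' (φ'' x) x) (hlim : Tendsto φ (cocompact ℝ) (𝓝 0))
    (heq : ∀ x, (c - φ x) * φ'' x = φ' x ^ 2 - γ * φ x) (x : ℝ) : φ x = 0 := by
  by_contra hx
  have hlim_top : Tendsto φ atTop (𝓝 0) := hlim.mono_left atTop_le_cocompact
  have hzero := firstIntegral_eq_zero_of_tendsto_atTop hφ hφ' heq hlim_top
  obtain ⟨m, hm, hm'⟩ := exists_ne_zero_hasDerivAt_eq_zero_of_tendsto_cocompact_zero hφ hlim hx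
  have hval : φ m = 3 * c / 2 :=
    eq_three_mul_div_two_of_firstIntegral_eq_zero hγ hm (by simpa only [hm'] using hzero m)
  have hc : c ≠ 0 := fun hc ↦ hm (by simp [hval, hc])
  have hcont : Continuous φ := continuous_iff_continuousAt.mpr fun y ↦ (hφ y).continuousAt
  have hbetween : c ∈ uIcc 0 (φ m) := by
    rw [hval, mem_uIcc]
    rcases le_total 0 c with h | h
    · exact .inl ⟨h, by linarith⟩
    · exact .inr ⟨by linarith, h⟩
  obtain ⟨y, hy⟩ := mem_range_of_tendsto_of_mem_uIcc hcont hlim_top hbetween hc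
  have hcube : γ * c ^ 3 / 6 = 0 := by
    rw [← firstIntegral_self_left (φ' y), ← hzero y, hy]
  exact div_ne_zero (mul_ne_zero hγ (pow_ne_zero 3 hc)) (by norm_num) hcube

end TravelingWave

/-- no nontrivial localized traveling wave: any `C²` solution `φ` of
`(c - φ) φ'' = (φ')² - γ φ` on `ℝ` with `φ, φ' → 0` as `|x| → ∞` is identically zero. -/
theorem no_localized_traveling_wave
    (γ c : ℝ) (hγ : 0 < γ) (φ : ℝ → ℝ) (hφ : ContDiff ℝ 2 φ)
    (hdecay_top : Filter.Tendsto φ Filter.atTop (nhds 0))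
    (hdecay_bot : Filter.Tendsto φ Filter.atBot (nhds 0))
    (hdecay_top' : Filter.Tendsto (deriv φ) Filter.atTop (nhds 0))
    (hdecay_bot' : Filter.Tendsto (deriv φ) Filter.atBot (nhds 0))
    (heq : ∀ x : ℝ, (c - φ x) * deriv (deriv φ) x = (deriv φ x) ^ 2 - γ * φ x) :
    ∀ x : ℝ, φ x = 0 :=
  no_localized_traveling_wave_general hγ.ne'
    (fun x ↦ (hφ.differentiable two_ne_zero x).hasDerivAt)
    (fun x ↦ (hφ.differentiable_deriv_two x).hasDerivAt)
    (cocompact_eq_atBot_atTop (α := ℝ) ▸ hdecay_bot.sup hdecay_top) heq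
end

section
/- Let h > 0, ε > 0, and set T₁ = (1/(2h)) log(1 + 2/ε). Suppose T > 0 and V : [0,T) → ℝ is differentiable with V'(t) ≤ −V(t)² + h² for all t ∈ (0,T) and V(0) ≤ −(1+ε) h. Then V(t) ≤ V₊(t) < 0 for all t ∈ [0,T), where V₊ is the solution of V₊' = −V₊² + h², V₊(0) = −(1+ε)h, which satisfies lim_{t↑T₁} V₊(t) = −∞; consequently T ≤ T₁. -/
open Filter

/-!
Two solutions of a Riccati inequality are compared through their difference `W = V - U`, which
satisfies the *linear* inequality `W' ≤ -(V + U) W`, so an integrating factor preserves the sign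
of `W 0`. The equation `U' = -U² + h²` has the solution `U t = -h coth (h (τ - t))`, which is
negative and tends to `-∞` as `t ↑ τ`; it starts at `-(1 + ε) h` exactly when
`h τ = artanh (1 / (1 + ε)) = log (1 + 2 / ε) / 2`. A `V` below `U` is dragged down to `-∞`, so it
cannot be continuous at `τ`.
-/

open Set Topology

section Comparison

variable {a b : ℝ}

theorem nonpos_of_hasDerivAt_le_mul {k W W' : ℝ → ℝ} (hk : ContinuousOn k (Icc a b))
    (hW : ContinuousOn W (Icc a b)) (hWW' : ∀ t ∈ Ioo a b, HasDerivAt W (W' t) t)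
    (hle : ∀ t ∈ Ioo a b, W' t ≤ k t * W t) (ha : W a ≤ 0) :
    ∀ t ∈ Icc a b, W t ≤ 0 := by
  intro t ht
  have hab : a ≤ b := ht.1.trans ht.2
  set K : ℝ → ℝ := fun s ↦ ∫ x in a..s, k x
  have hK : ContinuousOn K (Icc a b) := by
    rw [← uIcc_of_le hab] at hk ⊢
    exact intervalIntegral.continuousOn_primitive_interval hk.integrableOn_uIcc
  have hKk (s : ℝ) (hs : s ∈ Ioo a b) : HasDerivAt K (k s) s :=
    intervalIntegral.integral_hasDerivAt_right
      ((hk.mono (Icc_subset_Icc_right hs.2.le)).intervalIntegrable_of_Icc hs.1.le)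
      ((hk.mono Ioo_subset_Icc_self).stronglyMeasurableAtFilter isOpen_Ioo s hs)
      (hk.continuousAt (Icc_mem_nhds hs.1 hs.2))
  have h_anti : AntitoneOn (fun s ↦ W s * Real.exp (-K s)) (Icc a b) := by
    refine antitoneOn_of_hasDerivWithinAt_nonpos (convex_Icc a b) (hW.mul hK.neg.rexp)
      (f' := fun s ↦ (W' s - k s * W s) * Real.exp (-K s)) ?_ ?_ <;>
      simp only [interior_Icc]
    · intro s hs
      refine (((hWW' s hs).mul (hKk s hs).neg.exp).congr_deriv ?_).hasDerivWithinAt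
      simp only [Pi.neg_apply]
      ring
    · exact fun s hs ↦ mul_nonpos_of_nonpos_of_nonneg (sub_nonpos.2 (hle s hs)) (Real.exp_pos _).le
  refine nonpos_of_mul_nonpos_left ?_ (Real.exp_pos (-K t))
  calc W t * Real.exp (-K t) ≤ W a * Real.exp (-K a) := h_anti (left_mem_Icc.2 hab) ht ht.1
    _ ≤ 0 := mul_nonpos_of_nonpos_of_nonneg ha (Real.exp_pos _).le

theorem le_of_riccati_le_of_le_riccati {q U U' V V' : ℝ → ℝ}
    (hU : ContinuousOn U (Icc a b)) (hUU' : ∀ t ∈ Ioo a b, HasDerivAt U (U' t) t)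
    (hV : ContinuousOn V (Icc a b)) (hVV' : ∀ t ∈ Ioo a b, HasDerivAt V (V' t) t)
    (hV_le : ∀ t ∈ Ioo a b, V' t ≤ -(V t) ^ 2 + q t)
    (hU_ge : ∀ t ∈ Ioo a b, -(U t) ^ 2 + q t ≤ U' t) (ha : V a ≤ U a) :
    ∀ t ∈ Icc a b, V t ≤ U t := by
  intro t ht
  refine sub_nonpos.1 (nonpos_of_hasDerivAt_le_mul (k := fun s ↦ -(V s + U s)) (hV.add hU).neg
    (hV.sub hU) (fun s hs ↦ (hVV' s hs).sub (hUU' s hs)) (fun s hs ↦ ?_) (sub_nonpos.2 ha) t ht)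
  calc V' s - U' s ≤ (-(V s) ^ 2 + q s) - (-(U s) ^ 2 + q s) := sub_le_sub (hV_le s hs) (hU_ge s hs)
    _ = -(V s + U s) * (V s - U s) := by ring

end Comparison

theorem le_of_continuousOn_of_le_of_tendsto_atBot {α β : Type*} [TopologicalSpace α]
    [LinearOrder α] [OrderTopology α] [DenselyOrdered α] [TopologicalSpace β] [LinearOrder β]
    [NoMinOrder β] [ClosedIicTopology β] {U V : α → β} {a b τ : α} (haτ : a < τ)
    (hV : ContinuousOn V (Ico a b)) (hVU : ∀ t ∈ Ico a b, t < τ → V t ≤ U t)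
    (hU : Tendsto U (𝓝[<] τ) atBot) : b ≤ τ := by
  by_contra! hτb
  have : (𝓝[<] τ).NeBot := nhdsLT_neBot_of_exists_lt ⟨a, haτ⟩
  have hV_atBot : Tendsto V (𝓝[<] τ) atBot := by
    refine tendsto_atBot_mono' _ ?_ hU
    filter_upwards [Ioo_mem_nhdsLT haτ] with t ht
    exact hVU t ⟨ht.1.le, ht.2.trans hτb⟩ ht.2
  have hV_nhds : Tendsto V (𝓝[<] τ) (𝓝 (V τ)) := by
    rw [← nhdsWithin_Ioo_eq_nhdsLT haτ]
    exact (hV τ ⟨haτ.le, hτb⟩).mono fun t ht ↦ ⟨ht.1.le, ht.2.trans hτb⟩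
  exact not_tendsto_nhds_of_tendsto_atBot hV_atBot _ hV_nhds

theorem artanh_inv_one_add {ε : ℝ} (hε : 0 < ε) :
    Real.artanh (1 + ε)⁻¹ = 1 / 2 * Real.log (1 + 2 / ε) := by
  have h_lt : (1 + ε)⁻¹ < 1 := inv_lt_one_of_one_lt₀ (by linarith)
  have h_pos : 0 < (1 + ε)⁻¹ := by positivity
  rw [Real.artanh_eq_half_log ⟨by linarith, h_lt.le⟩]
  congr 2
  have : 1 + ε - 1 ≠ 0 := by linarith
  field_simp
  ring

/-- The solution `t ↦ -h coth (h (τ - t))` of the Riccati equation `U' = -U² + h²` that blows up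
at time `τ`; its value at `t = τ` is the junk value `0`. -/
noncomputable def riccatiBlowup (h τ t : ℝ) : ℝ :=
  -h * Real.cosh (h * (τ - t)) / Real.sinh (h * (τ - t))

section RiccatiBlowup

variable {h τ t : ℝ}

theorem hasDerivAt_riccatiBlowup (hh : h ≠ 0) (ht : t ≠ τ) :
    HasDerivAt (riccatiBlowup h τ) (-(riccatiBlowup h τ t) ^ 2 + h ^ 2) t := by
  have h_sinh : Real.sinh (h * (τ - t)) ≠ 0 :=
    Real.sinh_ne_zero.2 (mul_ne_zero hh (sub_ne_zero.2 ht.symm))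
  have h_phase : HasDerivAt (fun s ↦ h * (τ - s)) (h * -1) t :=
    ((hasDerivAt_id t).const_sub τ).const_mul h
  refine ((h_phase.cosh.const_mul (-h)).div h_phase.sinh h_sinh).congr_deriv ?_
  rw [riccatiBlowup]
  field_simp
  ring

theorem riccatiBlowup_neg (hh : 0 < h) (ht : t < τ) : riccatiBlowup h τ t < 0 :=
  div_neg_of_neg_of_pos (mul_neg_of_neg_of_pos (neg_neg_of_pos hh) (Real.cosh_pos _))
    (Real.sinh_pos_iff.2 (mul_pos hh (sub_pos.2 ht)))

theorem tendsto_riccatiBlowup_atBot (hh : 0 < h) (τ : ℝ) :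
    Tendsto (riccatiBlowup h τ) (𝓝[<] τ) atBot := by
  have h_num : Tendsto (fun t ↦ -h * Real.cosh (h * (τ - t))) (𝓝[<] τ) (𝓝 (-h)) := by
    refine (Continuous.tendsto' (by fun_prop) _ _ ?_).mono_left nhdsWithin_le_nhds
    simp
  have h_den : Tendsto (fun t ↦ Real.sinh (h * (τ - t))) (𝓝[<] τ) (𝓝[>] 0) := by
    refine tendsto_nhdsWithin_iff.2
      ⟨(Continuous.tendsto' (by fun_prop) _ _ ?_).mono_left nhdsWithin_le_nhds, ?_⟩
    · simp
    · filter_upwards [self_mem_nhdsWithin] with t ht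
      exact Real.sinh_pos_iff.2 (mul_pos hh (sub_pos.2 ht))
  exact h_num.neg_mul_atTop (neg_neg_of_pos hh) h_den.inv_tendsto_nhdsGT_zero

theorem le_riccatiBlowup_of_riccati_le {a b : ℝ} {V V' : ℝ → ℝ} (hh : h ≠ 0) (hbτ : b < τ)
    (hV : ContinuousOn V (Icc a b)) (hVV' : ∀ t ∈ Ioo a b, HasDerivAt V (V' t) t)
    (hV_le : ∀ t ∈ Ioo a b, V' t ≤ -(V t) ^ 2 + h ^ 2) (ha : V a ≤ riccatiBlowup h τ a) :
    ∀ t ∈ Icc a b, V t ≤ riccatiBlowup h τ t := by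
  have h_sol (t : ℝ) (ht : t ≤ b) := hasDerivAt_riccatiBlowup hh (ht.trans_lt hbτ).ne
  exact le_of_riccati_le_of_le_riccati (q := fun _ ↦ h ^ 2)
    (fun t ht ↦ (h_sol t ht.2).continuousAt.continuousWithinAt) (fun t ht ↦ h_sol t ht.2.le)
    hV hVV' hV_le (fun _ _ ↦ le_rfl) ha

theorem riccatiBlowup_artanh_div_zero {x : ℝ} (hh : h ≠ 0) (hx : x ∈ Ioo (-1) 1) :
    riccatiBlowup h (Real.artanh x / h) 0 = -h / x := by
  rw [riccatiBlowup, sub_zero, mul_div_cancel₀ _ hh, mul_div_assoc, ← inv_div,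
    ← Real.tanh_eq_sinh_div_cosh, Real.tanh_artanh hx, ← div_eq_mul_inv]

theorem riccatiBlowup_log_zero {ε : ℝ} (hh : h ≠ 0) (hε : 0 < ε) :
    riccatiBlowup h (1 / (2 * h) * Real.log (1 + 2 / ε)) 0 = -(1 + ε) * h := by
  have h_mem : (1 + ε)⁻¹ ∈ Ioo (-1) 1 :=
    ⟨neg_one_lt_zero.trans (by positivity), inv_lt_one_of_one_lt₀ (by linarith)⟩
  have h_time : 1 / (2 * h) * Real.log (1 + 2 / ε) = Real.artanh (1 + ε)⁻¹ / h := by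
    rw [artanh_inv_one_add hε]
    field_simp
  rw [h_time, riccatiBlowup_artanh_div_zero hh h_mem, div_inv_eq_mul]
  ring

end RiccatiBlowup

/-- Riccati comparison: if `V' ≤ -V² + h²` on `(0,T)` and
`V(0) ≤ -(1+ε)h`, then `V ≤ V₊ < 0` on `[0,T)` where `V₊` solves
`V₊' = -V₊² + h²`, `V₊(0) = -(1+ε)h`, `V₊ → -∞` as `t ↑ T₁ = (1/(2h)) log(1+2/ε)`;
consequently `T ≤ T₁`. -/
theorem riccati_comparison_blowup
    (h ε T : ℝ) (hh : 0 < h) (hε : 0 < ε) (hT : 0 < T)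
    (T₁ : ℝ) (hT₁ : T₁ = 1 / (2 * h) * Real.log (1 + 2 / ε))
    (V : ℝ → ℝ)
    (hdiff : ∀ t ∈ Set.Ico (0 : ℝ) T, DifferentiableAt ℝ V t)
    (hineq : ∀ t ∈ Set.Ioo (0 : ℝ) T, deriv V t ≤ -(V t) ^ 2 + h ^ 2)
    (hV0 : V 0 ≤ -(1 + ε) * h) :
    ∃ Vp : ℝ → ℝ,
      Vp 0 = -(1 + ε) * h ∧
      (∀ t ∈ Set.Ico (0 : ℝ) T₁, HasDerivAt Vp (-(Vp t) ^ 2 + h ^ 2) t) ∧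
      Filter.Tendsto Vp (nhdsWithin T₁ (Set.Iio T₁)) Filter.atBot ∧
      T ≤ T₁ ∧
      ∀ t ∈ Set.Ico (0 : ℝ) T, V t ≤ Vp t ∧ Vp t < 0 := by
  have hT₁_pos : 0 < T₁ := by
    rw [hT₁]
    exact mul_pos (by positivity) (Real.log_pos (lt_add_of_pos_right 1 (by positivity)))
  have h_init : riccatiBlowup h T₁ 0 = -(1 + ε) * h := hT₁ ▸ riccatiBlowup_log_zero hh.ne' hε
  have h_tendsto := tendsto_riccatiBlowup_atBot hh T₁
  have hV : ContinuousOn V (Ico 0 T) := fun t ht ↦ (hdiff t ht).continuousAt.continuousWithinAt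
  have h_le (t : ℝ) (ht : t ∈ Ico 0 T) (htT₁ : t < T₁) : V t ≤ riccatiBlowup h T₁ t :=
    le_riccatiBlowup_of_riccati_le hh.ne' htT₁ (hV.mono (Icc_subset_Ico_right ht.2))
      (fun s hs ↦ (hdiff s ⟨hs.1.le, hs.2.trans ht.2⟩).hasDerivAt)
      (fun s hs ↦ hineq s ⟨hs.1, hs.2.trans ht.2⟩) (hV0.trans_eq h_init.symm)
      t (right_mem_Icc.2 ht.1)
  have hTT₁ : T ≤ T₁ := le_of_continuousOn_of_le_of_tendsto_atBot hT₁_pos hV h_le h_tendsto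
  exact ⟨riccatiBlowup h T₁, h_init, fun t ht ↦ hasDerivAt_riccatiBlowup hh.ne' ht.2.ne,
    h_tendsto, hTT₁, fun t ht ↦
      ⟨h_le t ht (ht.2.trans_le hTT₁), riccatiBlowup_neg hh (ht.2.trans_le hTT₁)⟩⟩
end
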